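/- arXiv:1808.01460 — 2 statements merged into one kernel-verified Lean document; each statement's English description precedes it below -/
import Mathlib

section
/- Let Γ be a non-empty set and let ℓ_∞(Γ, ℂ) be the complex Banach space of bounded functions from Γ to ℂ with the supremum norm. Then ℓ_∞(Γ, ℂ) satisfies the Mazur–Ulam property: for every real Banach space Y, every surjective isometry Δ : S(ℓ_∞(Γ, ℂ)) → S(Y) between the unit spheres extends to a surjective real-linear isometry from ℓ_∞(Γ, ℂ) onto Y. (This is an instance of the result that every JBW*-triple whose atomic part of the bidual is not a rank-two Cartan factor satisfies the Mazur–Ulam property.) -/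
/-- A closed set of reals that contains the midpoint of any two of its points in `[a, b]`, together
with `a` and `b`, contains `[a, b]`. -/
theorem Icc_subset_of_isClosed_of_midpoint_mem {S : Set ℝ} (hS : IsClosed S) {a b : ℝ}
    (ha : a ∈ S) (hb : b ∈ S)
    (hmid : ∀ x ∈ S, ∀ y ∈ S, x ∈ Set.Icc a b → y ∈ Set.Icc a b → (x + y) / 2 ∈ S) :
    Set.Icc a b ⊆ S := by
  intro θ hθ
  obtain ⟨p, ⟨hpS, hp⟩, hpmax⟩ := ((isCompact_Icc (a := a) (b := θ)).inter_left hS).exists_isGreatest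
    ⟨a, ha, le_refl a, hθ.1⟩
  obtain ⟨q, ⟨hqS, hq⟩, hqmin⟩ := ((isCompact_Icc (a := θ) (b := b)).inter_left hS).exists_isLeast
    ⟨b, hb, hθ.2, le_refl b⟩
  have hm := hmid p hpS q hqS ⟨hp.1, hp.2.trans hθ.2⟩ ⟨hθ.1.trans hq.1, hq.2⟩
  have hp1 := hp.1
  have hp2 := hp.2
  have hq1 := hq.1
  have hq2 := hq.2
  have hpq : q ≤ p := by
    rcases le_total ((p + q) / 2) θ with h | h
    · have := hpmax ⟨hm, by linarith, h⟩
      linarith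
    · have := hqmin ⟨hm, h, by linarith⟩
      linarith
  rwa [show θ = p by linarith]

section Day

variable {Y : Type*} [NormedAddCommGroup Y] [NormedSpace ℝ Y]

theorem norm_sq_add_norm_sq_of_norm_eq
    (h : ∀ u v : Y, ‖u‖ = 1 → ‖v‖ = 1 → ‖u + v‖ ^ 2 + ‖u - v‖ ^ 2 = 4) {u v : Y}
    (huv : ‖u‖ = ‖v‖) : ‖u + v‖ ^ 2 + ‖u - v‖ ^ 2 = 4 * ‖u‖ ^ 2 := by
  rcases eq_or_ne u 0 with rfl | hu
  · have : v = 0 := by simpa using huv.symm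
    simp [this]
  have hu' : ‖u‖ ≠ 0 := norm_ne_zero_iff.2 hu
  have key := h (‖u‖⁻¹ • u) (‖u‖⁻¹ • v) (by rw [norm_smul]; simp [hu'])
    (by rw [norm_smul, ← huv]; simp [hu'])
  rw [← smul_add, ← smul_sub, norm_smul, norm_smul, norm_inv, norm_norm] at key
  field_simp at key
  linarith

theorem norm_cos_smul_add_sin_smul
    (h : ∀ u v : Y, ‖u‖ = 1 → ‖v‖ = 1 → ‖u + v‖ ^ 2 + ‖u - v‖ ^ 2 = 4) {e f : Y}
    (he : ‖e‖ = 1) (hf : ‖f‖ = 1) (hef : ∀ s t : ℝ, ‖s • e + t • f‖ ^ 2 ≤ s ^ 2 + t ^ 2)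
    {θ : ℝ} (hθ : θ ∈ Set.Icc 0 (Real.pi / 2)) :
    ‖Real.cos θ • e + Real.sin θ • f‖ = 1 := by
  let S : Set ℝ := {θ | ‖Real.cos θ • e + Real.sin θ • f‖ = 1}
  have hle : ∀ θ, ‖Real.cos θ • e + Real.sin θ • f‖ ^ 2 ≤ 1 := fun θ => by
    simpa using hef (Real.cos θ) (Real.sin θ)
  refine Icc_subset_of_isClosed_of_midpoint_mem (S := S) (a := 0) (b := Real.pi / 2) ?_ ?_ ?_ ?_ hθ
  · exact isClosed_eq (by fun_prop) continuous_const
  · simp [S, he]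
  · simp [S, hf]
  · intro x hx y hy hx' hy'
    have hsum : (Real.cos x • e + Real.sin x • f) + (Real.cos y • e + Real.sin y • f) =
        (2 * Real.cos ((x - y) / 2)) •
          (Real.cos ((x + y) / 2) • e + Real.sin ((x + y) / 2) • f) := by
      rw [add_add_add_comm, ← add_smul, ← add_smul, Real.cos_add_cos, Real.sin_add_sin]
      module
    have hdiff : (Real.cos x • e + Real.sin x • f) - (Real.cos y • e + Real.sin y • f) =
        (2 * Real.sin ((x - y) / 2)) •
          (Real.cos ((x + y) / 2 + Real.pi / 2) • e +
            Real.sin ((x + y) / 2 + Real.pi / 2) • f) := by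
      rw [add_sub_add_comm, ← sub_smul, ← sub_smul, Real.cos_sub_cos, Real.sin_sub_sin,
        Real.cos_add_pi_div_two, Real.sin_add_pi_div_two]
      module
    have key := h _ _ hx hy
    rw [hsum, hdiff, norm_smul, norm_smul, mul_pow, mul_pow, Real.norm_eq_abs, Real.norm_eq_abs,
      sq_abs, sq_abs] at key
    have hc : 0 < Real.cos ((x - y) / 2) := by
      apply Real.cos_pos_of_mem_Ioo
      have := Real.pi_pos
      have h1 := hx'.1
      have h2 := hx'.2
      have h3 := hy'.1
      have h4 := hy'.2
      constructor <;> linarith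
    have h1 := hle ((x + y) / 2)
    have h2 := hle ((x + y) / 2 + Real.pi / 2)
    have h3 := Real.sin_sq_add_cos_sq ((x - y) / 2)
    have hc2 := pow_pos hc 2
    have hs2 := sq_nonneg (Real.sin ((x - y) / 2))
    have h4 : 1 ≤ ‖Real.cos ((x + y) / 2) • e + Real.sin ((x + y) / 2) • f‖ ^ 2 := by
      by_contra! hlt
      nlinarith
    have h5 : ‖Real.cos ((x + y) / 2) • e + Real.sin ((x + y) / 2) • f‖ ^ 2 = 1 :=
      le_antisymm h1 h4
    exact (pow_eq_one_iff_of_nonneg (norm_nonneg _) two_ne_zero).1 h5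

theorem norm_smul_add_smul_sq_of_nonneg
    (h : ∀ u v : Y, ‖u‖ = 1 → ‖v‖ = 1 → ‖u + v‖ ^ 2 + ‖u - v‖ ^ 2 = 4) {e f : Y}
    (he : ‖e‖ = 1) (hf : ‖f‖ = 1) (hef : ∀ s t : ℝ, ‖s • e + t • f‖ ^ 2 ≤ s ^ 2 + t ^ 2)
    {s t : ℝ} (hs : 0 ≤ s) (ht : 0 ≤ t) : ‖s • e + t • f‖ ^ 2 = s ^ 2 + t ^ 2 := by
  let z : ℂ := ⟨s, t⟩
  have harg : z.arg ∈ Set.Icc 0 (Real.pi / 2) :=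
    ⟨Complex.arg_nonneg_iff.2 ht, Complex.arg_le_pi_div_two_iff.2 (Or.inl hs)⟩
  have h1 := norm_cos_smul_add_sin_smul h he hf hef harg
  have h2 : s • e + t • f = ‖z‖ • (Real.cos z.arg • e + Real.sin z.arg • f) := by
    rw [smul_add, smul_smul, smul_smul, Complex.norm_mul_cos_arg, Complex.norm_mul_sin_arg]
  rw [h2, norm_smul, h1, norm_norm, mul_one, Complex.sq_norm, Complex.normSq_apply]
  simp only [z]
  ring

theorem norm_smul_add_smul_sq
    (h : ∀ u v : Y, ‖u‖ = 1 → ‖v‖ = 1 → ‖u + v‖ ^ 2 + ‖u - v‖ ^ 2 = 4) {e f : Y}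
    (he : ‖e‖ = 1) (hf : ‖f‖ = 1) (hef : ∀ s t : ℝ, ‖s • e + t • f‖ ^ 2 ≤ s ^ 2 + t ^ 2)
    (s t : ℝ) : ‖s • e + t • f‖ ^ 2 = s ^ 2 + t ^ 2 := by
  wlog hs : 0 ≤ s generalizing e s
  · have := this (e := -e) (by simpa using he)
      (fun s t => by simpa using hef (-s) t) (-s) (by linarith)
    simpa using this
  wlog ht : 0 ≤ t generalizing f t
  · have := this (f := -f) (by simpa using hf) (-t)
      (fun s t => by simpa using hef s (-t)) (by linarith)
    simpa using this
  exact norm_smul_add_smul_sq_of_nonneg h he hf hef hs ht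

/-- Among the quadratic forms on `ℝ²` dominating the square of a norm there is one which agrees with
it at two linearly independent vectors. -/
theorem exists_quadratic_majorant (x y : Y) :
    ∃ a b c : ℝ, (∀ s t : ℝ, ‖s • x + t • y‖ ^ 2 ≤ a * s ^ 2 + 2 * b * (s * t) + c * t ^ 2) ∧
      ∃ s₁ t₁ s₂ t₂ : ℝ, s₁ * t₂ - t₁ * s₂ ≠ 0 ∧
        ‖s₁ • x + t₁ • y‖ ^ 2 = a * s₁ ^ 2 + 2 * b * (s₁ * t₁) + c * t₁ ^ 2 ∧
        ‖s₂ • x + t₂ • y‖ ^ 2 = a * s₂ ^ 2 + 2 * b * (s₂ * t₂) + c * t₂ ^ 2 := by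
  let N : ℝ × ℝ → ℝ := fun p => ‖p.1 • x + p.2 • y‖ ^ 2
  let C : Set (ℝ × ℝ) := {p | p.1 ^ 2 + p.2 ^ 2 = 1}
  let Q : ℝ × ℝ × ℝ → ℝ × ℝ → ℝ :=
    fun q p => q.1 * p.1 ^ 2 + 2 * q.2.1 * (p.1 * p.2) + q.2.2 * p.2 ^ 2
  have hNcont : Continuous N := by fun_prop
  have hN0 : ∀ p, 0 ≤ N p := fun p => sq_nonneg _
  have hCclosed : IsClosed C := isClosed_eq (by fun_prop) continuous_const
  have hCbdd : C ⊆ Set.Icc (-1) 1 ×ˢ Set.Icc (-1) 1 := by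
    intro p hp
    have hp : p.1 ^ 2 + p.2 ^ 2 = 1 := hp
    refine ⟨⟨?_, ?_⟩, ⟨?_, ?_⟩⟩ <;> nlinarith
  have hCcomp : IsCompact C := (isCompact_Icc.prod isCompact_Icc).of_isClosed_subset hCclosed hCbdd
  obtain ⟨M, hM⟩ := hCcomp.exists_bound_of_continuousOn hNcont.continuousOn
  have hM' : ∀ p ∈ C, N p ≤ M := fun p hp => (le_abs_self _).trans (hM p hp)
  let K : Set (ℝ × ℝ × ℝ) := {q | (∀ p ∈ C, N p ≤ Q q p) ∧ q.1 + q.2.2 ≤ 2 * M}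
  have hKclosed : IsClosed K := by
    have htr : IsClosed {q : ℝ × ℝ × ℝ | q.1 + q.2.2 ≤ 2 * M} :=
      isClosed_le (by fun_prop) continuous_const
    have hmaj : IsClosed {q : ℝ × ℝ × ℝ | ∀ p ∈ C, N p ≤ Q q p} := by
      have h : {q : ℝ × ℝ × ℝ | ∀ p ∈ C, N p ≤ Q q p} = ⋂ p ∈ C, {q | N p ≤ Q q p} := by
        ext q
        simp
      rw [h]
      exact isClosed_biInter fun p _ =>
        isClosed_le continuous_const (by simp only [Q]; fun_prop)
    exact hmaj.inter htr
  have hKscale : ∀ q, (∀ p ∈ C, N p ≤ Q q p) → ∀ p, N p ≤ Q q p := by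
    intro q hq p
    rcases eq_or_ne (p.1 ^ 2 + p.2 ^ 2) 0 with h0 | h0
    · have h1 : p.1 = 0 := by nlinarith [sq_nonneg p.1, sq_nonneg p.2]
      have h2 : p.2 = 0 := by nlinarith [sq_nonneg p.1, sq_nonneg p.2]
      simp [N, Q, h1, h2]
    · have hpos : 0 < p.1 ^ 2 + p.2 ^ 2 := lt_of_le_of_ne (by positivity) h0.symm
      set r := Real.sqrt (p.1 ^ 2 + p.2 ^ 2) with hr
      have hr0 : 0 < r := Real.sqrt_pos.2 hpos
      have hr2 : r ^ 2 = p.1 ^ 2 + p.2 ^ 2 := Real.sq_sqrt hpos.le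
      have := hq (p.1 / r, p.2 / r) (by
        change (p.1 / r) ^ 2 + (p.2 / r) ^ 2 = 1
        field_simp
        exact hr2.symm)
      have e1 : N (p.1 / r, p.2 / r) = N p / r ^ 2 := by
        have : (p.1 / r) • x + (p.2 / r) • y = r⁻¹ • (p.1 • x + p.2 • y) := by
          rw [smul_add, smul_smul, smul_smul, div_eq_inv_mul, div_eq_inv_mul]
        simp only [N]
        rw [this, norm_smul, norm_inv, Real.norm_of_nonneg hr0.le]
        field_simp
      have e2 : Q q (p.1 / r, p.2 / r) = Q q p / r ^ 2 := by
        simp only [Q]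
        field_simp
      rw [e1, e2] at this
      exact (div_le_div_iff_of_pos_right (by positivity)).1 this
  have hKne : K.Nonempty := by
    refine ⟨(M, 0, M), fun p hp => ?_, by simp only; linarith⟩
    have hp' : p.1 ^ 2 + p.2 ^ 2 = 1 := hp
    have : Q (M, 0, M) p = M := by
      simp only [Q]
      linear_combination M * hp'
    rw [this]
    exact hM' p hp
  have hKbdd : K ⊆ Set.Icc 0 (2 * M) ×ˢ Set.Icc (-M) M ×ˢ Set.Icc 0 (2 * M) := by
    rintro ⟨a, b, c⟩ ⟨hq, htr⟩
    have hq := hKscale _ hq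
    have h1 := (hN0 _).trans (hq (1, 0))
    have h2 := (hN0 _).trans (hq (0, 1))
    have h3 := (hN0 _).trans (hq (1, 1))
    have h4 := (hN0 _).trans (hq (1, -1))
    simp only [Q] at h1 h2 h3 h4 htr
    refine ⟨⟨?_, ?_⟩, ⟨?_, ?_⟩, ⟨?_, ?_⟩⟩ <;> simp only <;> linarith
  have hKcomp : IsCompact K :=
    (isCompact_Icc.prod (isCompact_Icc.prod isCompact_Icc)).of_isClosed_subset hKclosed hKbdd
  obtain ⟨q, ⟨hqK, hqM⟩, hqmin⟩ := hKcomp.exists_isMinOn hKne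
    (f := fun q : ℝ × ℝ × ℝ => q.1 + q.2.2) (by fun_prop)
  have hqall := hKscale q hqK
  refine ⟨q.1, q.2.1, q.2.2, fun s t => hqall (s, t), ?_⟩
  by_contra! hcon
  obtain ⟨u, huC, hu⟩ : ∃ u ∈ C, ∀ p ∈ C, N p = Q q p → p.1 * u.2 - p.2 * u.1 = 0 := by
    by_cases hex : ∃ u ∈ C, N u = Q q u
    · obtain ⟨u, huC, hu⟩ := hex
      refine ⟨u, huC, fun p _ hp => ?_⟩
      by_contra hne
      exact hcon p.1 p.2 u.1 u.2 hne hp hu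
    · push Not at hex
      exact ⟨(1, 0), by simp [C], fun p hp hp' => absurd hp' (hex p hp)⟩
  have huC : u.1 ^ 2 + u.2 ^ 2 = 1 := huC
  let R : ℝ × ℝ × ℝ := (-1 + 3 / 2 * u.1 ^ 2, 3 / 2 * (u.1 * u.2), -1 + 3 / 2 * u.2 ^ 2)
  have hR : ∀ p, Q R p = -(p.1 ^ 2 + p.2 ^ 2) + 3 / 2 * (p.1 * u.1 + p.2 * u.2) ^ 2 := by
    intro p
    simp only [Q, R]
    ring
  have hQcont : ∀ q, Continuous (Q q) := fun q => by fun_prop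
  have hpos : ∀ p ∈ C ∩ {p | Q R p ≤ 0}, 0 < Q q p - N p := by
    rintro p ⟨hpC, hpR⟩
    have hpC' : p.1 ^ 2 + p.2 ^ 2 = 1 := hpC
    have hpR : Q R p ≤ 0 := hpR
    refine lt_of_le_of_ne (sub_nonneg.2 (hqall p)) fun heq => ?_
    have hdet := hu p hpC (by linarith)
    rw [hR, hpC'] at hpR
    have : (p.1 * u.1 + p.2 * u.2) ^ 2 = 1 := by
      linear_combination hpC' * (u.1 ^ 2 + u.2 ^ 2) + huC - (p.1 * u.2 - p.2 * u.1) * hdet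
    linarith
  obtain ⟨δ, hδ, hδle⟩ : ∃ δ > 0, ∀ p ∈ C ∩ {p | Q R p ≤ 0}, δ ≤ Q q p - N p := by
    have hcomp : IsCompact (C ∩ {p | Q R p ≤ 0}) :=
      hCcomp.inter_right (isClosed_le (hQcont R) continuous_const)
    rcases (C ∩ {p | Q R p ≤ 0}).eq_empty_or_nonempty with he | hne
    · exact ⟨1, one_pos, fun p hp => by simp [he] at hp⟩
    · obtain ⟨p₀, hp₀, hmin⟩ := hcomp.exists_isMinOn hne
        (f := fun p => Q q p - N p) ((hQcont q).sub hNcont).continuousOn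
      exact ⟨_, hpos p₀ hp₀, fun p hp => hmin hp⟩
  have hQadd : ∀ p, Q (q + δ • R) p = Q q p + δ * Q R p := by
    intro p
    simp only [Q, Prod.fst_add, Prod.snd_add, Prod.smul_fst, Prod.smul_snd, smul_eq_mul]
    ring
  have htrace : (q + δ • R).1 + (q + δ • R).2.2 = q.1 + q.2.2 - δ / 2 := by
    simp only [R, Prod.fst_add, Prod.snd_add, Prod.smul_fst, Prod.smul_snd, smul_eq_mul]
    linear_combination (3 / 2 * δ) * huC
  have hmem : q + δ • R ∈ K := by
    refine ⟨fun p hp => ?_, by rw [htrace]; linarith⟩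
    rw [hQadd]
    rcases le_total (Q R p) 0 with hneg | hnn
    · have h1 := hδle p ⟨hp, hneg⟩
      have hp' : p.1 ^ 2 + p.2 ^ 2 = 1 := hp
      have h2 : -1 ≤ Q R p := by
        rw [hR, hp']
        nlinarith [sq_nonneg (p.1 * u.1 + p.2 * u.2)]
      nlinarith
    · have := mul_nonneg hδ.le hnn
      linarith [hqall p]
  have := hqmin hmem
  simp only [Set.mem_ofPred_eq, htrace] at this
  linarith

theorem parallelogram_of_linearIndependent
    (h : ∀ u v : Y, ‖u‖ = 1 → ‖v‖ = 1 → ‖u + v‖ ^ 2 + ‖u - v‖ ^ 2 = 4) {x y : Y}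
    (hxy : LinearIndependent ℝ ![x, y]) :
    ‖x + y‖ ^ 2 + ‖x - y‖ ^ 2 = 2 * (‖x‖ ^ 2 + ‖y‖ ^ 2) := by
  obtain ⟨a, b, c, hQ, s₁, t₁, s₂, t₂, hdet, h₁, h₂⟩ := exists_quadratic_majorant x y
  have hind := LinearIndependent.pair_iff.1 hxy
  -- the coordinates of two linearly independent contact vectors of the same norm
  obtain ⟨p₁, q₁, p₂, q₂, hdet', hn, hc₁, hc₂⟩ : ∃ p₁ q₁ p₂ q₂ : ℝ, p₁ * q₂ - q₁ * p₂ ≠ 0 ∧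
      ‖p₁ • x + q₁ • y‖ = ‖p₂ • x + q₂ • y‖ ∧
      ‖p₁ • x + q₁ • y‖ ^ 2 = a * p₁ ^ 2 + 2 * b * (p₁ * q₁) + c * q₁ ^ 2 ∧
      ‖p₂ • x + q₂ • y‖ ^ 2 = a * p₂ ^ 2 + 2 * b * (p₂ * q₂) + c * q₂ ^ 2 := by
    set n₁ := ‖s₁ • x + t₁ • y‖ with hn₁
    set n₂ := ‖s₂ • x + t₂ • y‖ with hn₂
    have hn₁0 : n₁ ≠ 0 := fun h0 => by
      obtain ⟨rfl, rfl⟩ := hind _ _ (norm_eq_zero.1 h0)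
      simp at hdet
    have hn₂0 : n₂ ≠ 0 := fun h0 => by
      obtain ⟨rfl, rfl⟩ := hind _ _ (norm_eq_zero.1 h0)
      simp at hdet
    have e₁ : ‖(n₂ * s₁) • x + (n₂ * t₁) • y‖ = n₂ * n₁ := by
      rw [mul_smul, mul_smul, ← smul_add, norm_smul, Real.norm_of_nonneg (norm_nonneg _)]
    have e₂ : ‖(n₁ * s₂) • x + (n₁ * t₂) • y‖ = n₁ * n₂ := by
      rw [mul_smul, mul_smul, ← smul_add, norm_smul, Real.norm_of_nonneg (norm_nonneg _)]
    refine ⟨n₂ * s₁, n₂ * t₁, n₁ * s₂, n₁ * t₂, ?_, ?_, ?_, ?_⟩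
    · rw [show n₂ * s₁ * (n₁ * t₂) - n₂ * t₁ * (n₁ * s₂) = n₁ * n₂ * (s₁ * t₂ - t₁ * s₂) by ring]
      positivity
    · rw [e₁, e₂, mul_comm]
    · rw [e₁]
      linear_combination n₂ ^ 2 * h₁
    · rw [e₂]
      linear_combination n₁ ^ 2 * h₂
  have hpar := norm_sq_add_norm_sq_of_norm_eq h hn
  have hsum : (p₁ • x + q₁ • y) + (p₂ • x + q₂ • y) = (p₁ + p₂) • x + (q₁ + q₂) • y := by module
  have hdiff : (p₁ • x + q₁ • y) - (p₂ • x + q₂ • y) = (p₁ - p₂) • x + (q₁ - q₂) • y := by module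
  rw [hsum, hdiff] at hpar
  have hle₁ := hQ (p₁ + p₂) (q₁ + q₂)
  have hle₂ := hQ (p₁ - p₂) (q₁ - q₂)
  have hn2 : ‖p₁ • x + q₁ • y‖ ^ 2 = ‖p₂ • x + q₂ • y‖ ^ 2 := by rw [hn]
  set e₁ := (p₁ + p₂) • x + (q₁ + q₂) • y with he₁
  set f₁ := (p₁ - p₂) • x + (q₁ - q₂) • y with hf₁
  have hee : ‖e₁‖ ^ 2 = a * (p₁ + p₂) ^ 2 + 2 * b * ((p₁ + p₂) * (q₁ + q₂)) + c * (q₁ + q₂) ^ 2 := by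
    nlinarith
  have hff : ‖f₁‖ ^ 2 = a * (p₁ - p₂) ^ 2 + 2 * b * ((p₁ - p₂) * (q₁ - q₂)) + c * (q₁ - q₂) ^ 2 := by
    nlinarith
  have hE : ‖e₁‖ ≠ 0 := fun h0 => by
    obtain ⟨h3, h4⟩ := hind _ _ (norm_eq_zero.1 h0)
    apply hdet'
    linear_combination q₂ * h3 - p₂ * h4
  have hF : ‖f₁‖ ≠ 0 := fun h0 => by
    obtain ⟨h3, h4⟩ := hind _ _ (norm_eq_zero.1 h0)
    apply hdet'
    linear_combination q₂ * h3 - p₂ * h4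
  have key := norm_smul_add_smul_sq h (e := ‖e₁‖⁻¹ • e₁) (f := ‖f₁‖⁻¹ • f₁)
    (by rw [norm_smul]; simp [hE]) (by rw [norm_smul]; simp [hF]) (by
      intro s t
      have h5 := hQ (s / ‖e₁‖ * (p₁ + p₂) + t / ‖f₁‖ * (p₁ - p₂))
        (s / ‖e₁‖ * (q₁ + q₂) + t / ‖f₁‖ * (q₁ - q₂))
      have h6 : s • ‖e₁‖⁻¹ • e₁ + t • ‖f₁‖⁻¹ • f₁ =
          (s / ‖e₁‖ * (p₁ + p₂) + t / ‖f₁‖ * (p₁ - p₂)) • x +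
          (s / ‖e₁‖ * (q₁ + q₂) + t / ‖f₁‖ * (q₁ - q₂)) • y := by
        rw [div_eq_mul_inv, div_eq_mul_inv]
        nth_rewrite 2 [he₁]
        nth_rewrite 2 [hf₁]
        module
      rw [h6]
      refine h5.trans (le_of_eq ?_)
      have h7 : s / ‖e₁‖ * ‖e₁‖ = s := div_mul_cancel₀ _ hE
      have h8 : t / ‖f₁‖ * ‖f₁‖ = t := div_mul_cancel₀ _ hF
      have hs2 : s ^ 2 = (s / ‖e₁‖) ^ 2 * ‖e₁‖ ^ 2 := by rw [← mul_pow, h7]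
      have ht2 : t ^ 2 = (t / ‖f₁‖) ^ 2 * ‖f₁‖ ^ 2 := by rw [← mul_pow, h8]
      rw [hs2, ht2, hee, hff]
      linear_combination (-2 * (s / ‖e₁‖) * (t / ‖f₁‖)) * (hc₁ - hc₂ - hn2))
  have key' : ∀ s t : ℝ, ‖s • e₁ + t • f₁‖ ^ 2 = s ^ 2 * ‖e₁‖ ^ 2 + t ^ 2 * ‖f₁‖ ^ 2 := by
    intro s t
    have := key (s * ‖e₁‖) (t * ‖f₁‖)
    rwa [smul_smul, smul_smul, mul_assoc, mul_assoc, mul_inv_cancel₀ hE, mul_inv_cancel₀ hF,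
      mul_one, mul_one, mul_pow, mul_pow] at this
  set d := (p₁ * q₂ - q₁ * p₂)⁻¹
  have hd : (p₁ * q₂ - q₁ * p₂) * d = 1 := mul_inv_cancel₀ hdet'
  obtain ⟨α, β, hx⟩ : ∃ α β : ℝ, x = α • e₁ + β • f₁ := by
    refine ⟨(q₂ - q₁) * d / 2, (q₂ + q₁) * d / 2, ?_⟩
    rw [he₁, hf₁]
    match_scalars
    · linear_combination -hd
    · ring
  obtain ⟨α', β', hy⟩ : ∃ α β : ℝ, y = α • e₁ + β • f₁ := by
    refine ⟨(p₁ - p₂) * d / 2, -(p₁ + p₂) * d / 2, ?_⟩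
    rw [he₁, hf₁]
    match_scalars
    · linear_combination -hd
    · ring
  have hxn : ‖x‖ ^ 2 = α ^ 2 * ‖e₁‖ ^ 2 + β ^ 2 * ‖f₁‖ ^ 2 := by rw [← key', ← hx]
  have hyn : ‖y‖ ^ 2 = α' ^ 2 * ‖e₁‖ ^ 2 + β' ^ 2 * ‖f₁‖ ^ 2 := by rw [← key', ← hy]
  have hxy1 : ‖x + y‖ ^ 2 = (α + α') ^ 2 * ‖e₁‖ ^ 2 + (β + β') ^ 2 * ‖f₁‖ ^ 2 := by
    rw [← key', add_smul, add_smul, add_add_add_comm, ← hx, ← hy]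
  have hxy2 : ‖x - y‖ ^ 2 = (α - α') ^ 2 * ‖e₁‖ ^ 2 + (β - β') ^ 2 * ‖f₁‖ ^ 2 := by
    rw [← key', sub_smul, sub_smul, sub_add_sub_comm, ← hx, ← hy]
  rw [hxy1, hxy2, hxn, hyn]
  ring

/-- **Day's theorem**: a norm satisfying the parallelogram identity on unit vectors satisfies it
everywhere. -/
theorem parallelogram_of_unit_vectors
    (h : ∀ u v : Y, ‖u‖ = 1 → ‖v‖ = 1 → ‖u + v‖ ^ 2 + ‖u - v‖ ^ 2 = 4) (x y : Y) :
    ‖x + y‖ ^ 2 + ‖x - y‖ ^ 2 = 2 * (‖x‖ ^ 2 + ‖y‖ ^ 2) := by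
  by_cases hxy : LinearIndependent ℝ ![x, y]
  · exact parallelogram_of_linearIndependent h hxy
  rcases eq_or_ne x 0 with rfl | hx
  · simp
    ring
  rw [LinearIndependent.pair_iff' hx] at hxy
  push Not at hxy
  obtain ⟨a, rfl⟩ := hxy
  rw [show x + a • x = (1 + a) • x by module, show x - a • x = (1 - a) • x by module]
  simp only [norm_smul, mul_pow, Real.norm_eq_abs, sq_abs]
  ring

/-- Under the parallelogram identity, polarization gives a linear functional. -/
theorem exists_linearMap_eq_polarization
    (h : ∀ x y : Y, ‖x + y‖ ^ 2 + ‖x - y‖ ^ 2 = 2 * (‖x‖ ^ 2 + ‖y‖ ^ 2)) (u : Y) :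
    ∃ φ : Y →ₗ[ℝ] ℝ, ∀ v, φ v = (‖u‖ ^ 2 + ‖v‖ ^ 2 - ‖u - v‖ ^ 2) / 2 := by
  let := InnerProductSpace.ofNorm (𝕜 := ℝ) (E := Y) (fun x y => by
    simpa only [pow_two] using h x y)
  refine ⟨(innerSL ℝ u).toLinearMap, fun v => ?_⟩
  have := norm_sub_sq_real u v
  change inner ℝ u v = _
  linarith

end Day

theorem Complex.eq_neg_of_norm_sub_eq_two {a b : ℂ} (ha : ‖a‖ ≤ 1) (hb : ‖b‖ = 1)
    (h : ‖a - b‖ = 2) : a = -b := by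
  have h1 := parallelogram_law_with_norm ℝ a b
  have h2 : ‖a + b‖ = 0 := by nlinarith [norm_nonneg a, norm_nonneg (a + b)]
  exact eq_neg_of_add_eq_zero_left (norm_eq_zero.1 h2)

theorem Complex.norm_sub_le_of_norm_eq_one {a w : ℂ} (ha : ‖a‖ = 1) :
    ‖a - w‖ ≤ 1 - (a.re * w.re + a.im * w.im) + ‖w‖ ^ 2 / 2 := by
  have h1 : ‖a - w‖ ^ 2 = ‖a‖ ^ 2 - 2 * (a.re * w.re + a.im * w.im) + ‖w‖ ^ 2 := by
    simp only [Complex.sq_norm, Complex.normSq_apply, Complex.sub_re, Complex.sub_im]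
    ring
  rw [ha] at h1
  nlinarith [sq_nonneg (‖a - w‖ - 1)]

theorem Complex.exists_eq_norm_mul (z : ℂ) : ∃ u : ℂ, ‖u‖ = 1 ∧ z = (‖z‖ : ℝ) • u := by
  rcases eq_or_ne z 0 with rfl | hz
  · exact ⟨1, by simp, by simp⟩
  · have : ‖z‖ ≠ 0 := norm_ne_zero_iff.2 hz
    exact ⟨(‖z‖⁻¹ : ℝ) • z, by rw [norm_smul]; simp [this], by rw [smul_smul]; simp [this]⟩

namespace EllInfty

variable {Γ : Type*} {Y : Type*} [NormedAddCommGroup Y] [NormedSpace ℝ Y]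

theorem norm_apply_le (x : lp (fun _ : Γ => ℂ) ⊤) (γ : Γ) : ‖x γ‖ ≤ ‖x‖ :=
  lp.norm_apply_le_norm ENNReal.top_ne_zero x γ

theorem norm_eq_one {x : lp (fun _ : Γ => ℂ) ⊤} (hx : ∀ γ, ‖x γ‖ ≤ 1) {γ : Γ}
    (hγ : ‖x γ‖ = 1) : ‖x‖ = 1 :=
  le_antisymm (lp.norm_le_of_forall_le zero_le_one hx) (hγ ▸ norm_apply_le x γ)

open Classical in
/-- The function `x` with its value at `γ` replaced by `z`. -/
noncomputable def update (x : lp (fun _ : Γ => ℂ) ⊤) (γ : Γ) (z : ℂ) : lp (fun _ : Γ => ℂ) ⊤ :=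
  x + lp.single ⊤ γ (z - x γ)

@[simp]
theorem update_self (x : lp (fun _ : Γ => ℂ) ⊤) (γ : Γ) (z : ℂ) : update x γ z γ = z := by
  simp [update]

theorem update_of_ne (x : lp (fun _ : Γ => ℂ) ⊤) {γ η : Γ} (h : η ≠ γ) (z : ℂ) :
    update x γ z η = x η := by
  simp [update, h]

theorem norm_update_apply_le {x : lp (fun _ : Γ => ℂ) ⊤} (hx : ‖x‖ ≤ 1) (γ : Γ) {z : ℂ}
    (hz : ‖z‖ ≤ 1) (η : Γ) : ‖update x γ z η‖ ≤ 1 := by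
  by_cases h : η = γ
  · subst h
    simpa using hz
  · rw [update_of_ne x h]
    exact (norm_apply_le x η).trans hx

theorem norm_sub_update_le (x : lp (fun _ : Γ => ℂ) ⊤) (γ : Γ) (z : ℂ) :
    ‖x - update x γ z‖ ≤ ‖x γ - z‖ := by
  refine lp.norm_le_of_forall_le (norm_nonneg _) fun η => ?_
  rw [lp.coeFn_sub, Pi.sub_apply]
  by_cases h : η = γ
  · subst h
    simp
  · simp [update_of_ne x h]

theorem norm_update_eq_one {x : lp (fun _ : Γ => ℂ) ⊤} (hx : ‖x‖ = 1) (γ : Γ) {z : ℂ}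
    (hz : ‖z‖ = 1) : ‖update x γ z‖ = 1 :=
  norm_eq_one (norm_update_apply_le hx.le γ hz.le) (γ := γ) (by simpa using hz)

theorem norm_update_eq_one_of_ne {x : lp (fun _ : Γ => ℂ) ⊤} (hx : ‖x‖ = 1) {γ δ : Γ} (h : δ ≠ γ)
    (hδ : ‖x δ‖ = 1) {z : ℂ} (hz : ‖z‖ ≤ 1) : ‖update x γ z‖ = 1 :=
  norm_eq_one (norm_update_apply_le hx.le γ hz) (γ := δ) (by rwa [update_of_ne x h])

/-- The function vanishing off `γ` and taking the value `z` at `γ`. -/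
noncomputable def peak (γ : Γ) (z : ℂ) : lp (fun _ : Γ => ℂ) ⊤ := update 0 γ z

@[simp]
theorem peak_self (γ : Γ) (z : ℂ) : peak γ z γ = z := update_self _ _ _

theorem peak_of_ne {γ η : Γ} (h : η ≠ γ) (z : ℂ) : peak γ z η = 0 := by
  rw [peak, update_of_ne _ h]
  rfl

theorem norm_peak (γ : Γ) {z : ℂ} (hz : ‖z‖ = 1) : ‖peak γ z‖ = 1 :=
  norm_eq_one (norm_update_apply_le (by simp) γ hz.le) (γ := γ) (by simpa using hz)

theorem norm_sub_eq_two {x y : lp (fun _ : Γ => ℂ) ⊤} (hx : ‖x‖ = 1) (hy : ‖y‖ = 1) {γ : Γ}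
    (hγ : ‖x γ‖ = 1) (h : y γ = -x γ) : ‖x - y‖ = 2 := by
  refine le_antisymm ((norm_sub_le x y).trans (by rw [hx, hy]; norm_num)) ?_
  have h1 := norm_apply_le (x - y) γ
  rw [lp.coeFn_sub, Pi.sub_apply, h, sub_neg_eq_add, ← two_mul, norm_mul, hγ] at h1
  simpa using h1

theorem apply_eq_neg_of_norm_sub_peak {y : lp (fun _ : Γ => ℂ) ⊤} (hy : ‖y‖ = 1) {γ : Γ} {z : ℂ}
    (hz : ‖z‖ = 1) (h : ‖y - peak γ z‖ = 2) : y γ = -z := by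
  have hyγ := (norm_apply_le y γ).trans hy.le
  refine Complex.eq_neg_of_norm_sub_eq_two hyγ hz ?_
  refine le_antisymm ((norm_sub_le _ _).trans (by rw [hz]; linarith)) ?_
  by_contra! hlt
  have : ‖y - peak γ z‖ ≤ max 1 ‖y γ - z‖ := by
    refine lp.norm_le_of_forall_le (by positivity) fun η => ?_
    rw [lp.coeFn_sub, Pi.sub_apply]
    by_cases hη : η = γ
    · subst hη
      simp
    · rw [peak_of_ne hη, sub_zero]
      exact ((norm_apply_le y η).trans hy.le).trans (le_max_left _ _)
  rw [h] at this
  exact absurd this (not_le.2 (max_lt one_lt_two hlt))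

/-- `Δ` restricts to an isometry from the unit sphere of `ℓ_∞(Γ, ℂ)` onto that of `Y`. -/
structure IsSphereIsometry (Δ : lp (fun _ : Γ => ℂ) ⊤ → Y) : Prop where
  norm_map : ∀ x, ‖x‖ = 1 → ‖Δ x‖ = 1
  surj : ∀ y : Y, ‖y‖ = 1 → ∃ x, ‖x‖ = 1 ∧ Δ x = y
  norm_map_sub : ∀ x y, ‖x‖ = 1 → ‖y‖ = 1 → ‖Δ x - Δ y‖ = ‖x - y‖

namespace IsSphereIsometry

variable {Δ : lp (fun _ : Γ => ℂ) ⊤ → Y}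

theorem exists_map_eq_neg_peak (hΔ : IsSphereIsometry Δ) (γ : Γ) {z : ℂ} (hz : ‖z‖ = 1) :
    ∃ w, ‖w‖ = 1 ∧ w γ = -z ∧ Δ w = -Δ (peak γ z) := by
  have hp := norm_peak γ hz
  obtain ⟨w, hw, hwΔ⟩ := hΔ.surj (-Δ (peak γ z)) (by rw [norm_neg, hΔ.norm_map _ hp])
  refine ⟨w, hw, apply_eq_neg_of_norm_sub_peak hw hz ?_, hwΔ⟩
  rw [← hΔ.norm_map_sub w _ hw hp, hwΔ, ← neg_add', norm_neg, ← two_smul ℝ, norm_smul,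
    hΔ.norm_map _ hp]
  simp

theorem norm_map_add_map_peak (hΔ : IsSphereIsometry Δ) {x : lp (fun _ : Γ => ℂ) ⊤} (hx : ‖x‖ = 1)
    {γ : Γ} (hγ : ‖x γ‖ = 1) : ‖Δ x + Δ (peak γ (x γ))‖ = 2 := by
  obtain ⟨w, hw, hwγ, hwΔ⟩ := hΔ.exists_map_eq_neg_peak γ hγ
  rw [← norm_sub_eq_two hx hw hγ hwγ, ← hΔ.norm_map_sub x w hx hw, hwΔ, sub_neg_eq_add]

theorem apply_eq_neg_of_map_eq_neg (hΔ : IsSphereIsometry Δ) {x w : lp (fun _ : Γ => ℂ) ⊤}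
    (hx : ‖x‖ = 1) (hw : ‖w‖ = 1) {γ : Γ} (hγ : ‖x γ‖ = 1) (h : Δ w = -Δ x) : w γ = -x γ := by
  refine apply_eq_neg_of_norm_sub_peak hw hγ ?_
  rw [← hΔ.norm_map_sub w _ hw (norm_peak γ hγ), h, ← neg_add', norm_neg,
    hΔ.norm_map_add_map_peak hx hγ]

theorem exists_map_eq_neg (hΔ : IsSphereIsometry Δ) {x : lp (fun _ : Γ => ℂ) ⊤} (hx : ‖x‖ = 1) :
    ∃ w, ‖w‖ = 1 ∧ Δ w = -Δ x :=
  hΔ.surj (-Δ x) (by rw [norm_neg, hΔ.norm_map x hx])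

theorem norm_map_add_map (hΔ : IsSphereIsometry Δ) {x y : lp (fun _ : Γ => ℂ) ⊤} (hx : ‖x‖ = 1)
    (hy : ‖y‖ = 1) {γ : Γ} (hγ : ‖x γ‖ = 1) (h : y γ = x γ) : ‖Δ x + Δ y‖ = 2 := by
  obtain ⟨w, hw, hwΔ⟩ := hΔ.exists_map_eq_neg hy
  have hwγ : w γ = -x γ := h ▸ hΔ.apply_eq_neg_of_map_eq_neg hy hw (h ▸ hγ) hwΔ
  rw [← norm_sub_eq_two hx hw hγ hwγ, ← hΔ.norm_map_sub x w hx hw, hwΔ, sub_neg_eq_add]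

theorem apply_eq_of_norm_map_add_map_peak (hΔ : IsSphereIsometry Δ) {x : lp (fun _ : Γ => ℂ) ⊤}
    (hx : ‖x‖ = 1) {γ : Γ} {z : ℂ} (hz : ‖z‖ = 1) (h : ‖Δ x + Δ (peak γ z)‖ = 2) : x γ = z := by
  obtain ⟨w, hw, hwΔ⟩ := hΔ.exists_map_eq_neg hx
  have hwγ : w γ = -z := by
    refine apply_eq_neg_of_norm_sub_peak hw hz ?_
    rw [← hΔ.norm_map_sub w _ hw (norm_peak γ hz), hwΔ, ← neg_add', norm_neg, h]
  have := hΔ.apply_eq_neg_of_map_eq_neg hw hx (γ := γ) (by rw [hwγ, norm_neg, hz])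
    (by rw [hwΔ, neg_neg])
  rw [this, hwγ, neg_neg]

/-- The image of a maximal face `{x | x γ = z}` of the unit sphere is convex. -/
theorem exists_map_eq_combo (hΔ : IsSphereIsometry Δ) {x y : lp (fun _ : Γ => ℂ) ⊤} (hx : ‖x‖ = 1)
    (hy : ‖y‖ = 1) {γ : Γ} (hγ : ‖x γ‖ = 1) (h : y γ = x γ) {α β : ℝ} (hα : 0 ≤ α) (hβ : 0 ≤ β)
    (hαβ : α + β = 1) : ∃ w, ‖w‖ = 1 ∧ w γ = x γ ∧ Δ w = α • Δ x + β • Δ y := by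
  set p := peak γ (x γ)
  have hp : ‖p‖ = 1 := norm_peak γ hγ
  have nx := hΔ.norm_map x hx
  have ny := hΔ.norm_map y hy
  have np := hΔ.norm_map p hp
  -- the normalized midpoint of `Δ x` and `Δ p` stays in the image of the face
  have hxp := hΔ.norm_map_add_map_peak hx hγ
  have hmn : ‖(1 / 2 : ℝ) • (Δ x + Δ p)‖ = 1 := by
    rw [norm_smul, hxp]
    norm_num
  obtain ⟨m, hm, hmΔ⟩ := hΔ.surj _ hmn
  have hmγ : m γ = x γ := by
    refine hΔ.apply_eq_of_norm_map_add_map_peak hm hγ ?_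
    refine le_antisymm ((norm_add_le _ _).trans (by rw [hΔ.norm_map m hm, np]; norm_num)) ?_
    rw [hmΔ]
    have e : (2 : ℝ) • (Δ x + Δ p) = ((1 / 2 : ℝ) • (Δ x + Δ p) + Δ p) +
        ((3 / 2 : ℝ) • Δ x + (1 / 2 : ℝ) • Δ p) := by module
    have h1 : ‖(2 : ℝ) • (Δ x + Δ p)‖ = 4 := by
      rw [norm_smul, hxp]
      norm_num
    have h2 : ‖(3 / 2 : ℝ) • Δ x + (1 / 2 : ℝ) • Δ p‖ ≤ 2 := by
      refine (norm_add_le _ _).trans ?_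
      rw [norm_smul, norm_smul, nx, np]
      norm_num
    have h3 := norm_add_le ((1 / 2 : ℝ) • (Δ x + Δ p) + Δ p)
      ((3 / 2 : ℝ) • Δ x + (1 / 2 : ℝ) • Δ p)
    rw [← e, h1] at h3
    linarith
  have hmy := hΔ.norm_map_add_map hm hy (hmγ ▸ hγ) (h.trans hmγ.symm)
  rw [hmΔ] at hmy
  have hbound : ∀ a b c : ℝ, 0 ≤ a → 0 ≤ b → 0 ≤ c → ‖a • Δ x + b • Δ y + c • Δ p‖ ≤ a + b + c := by
    intro a b c ha hb hc
    refine (norm_add₃_le).trans ?_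
    rw [norm_smul, norm_smul, norm_smul, nx, ny, np, Real.norm_of_nonneg ha, Real.norm_of_nonneg hb,
      Real.norm_of_nonneg hc]
    linarith
  have hge : 2 ≤ ‖α • Δ x + β • Δ y + Δ p‖ := by
    have e : (4 : ℝ) • ((1 / 2 : ℝ) • (Δ x + Δ p) + Δ y) = (α • Δ x + β • Δ y + Δ p) +
        ((2 - α) • Δ x + (4 - β) • Δ y + (1 : ℝ) • Δ p) := by module
    have h1 : ‖(4 : ℝ) • ((1 / 2 : ℝ) • (Δ x + Δ p) + Δ y)‖ = 8 := by
      rw [norm_smul, hmy]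
      norm_num
    have h2 := hbound (2 - α) (4 - β) 1 (by linarith) (by linarith) zero_le_one
    have h3 := norm_add_le (α • Δ x + β • Δ y + Δ p)
      ((2 - α) • Δ x + (4 - β) • Δ y + (1 : ℝ) • Δ p)
    rw [← e, h1] at h3
    linarith
  have hle := hbound α β 0 hα hβ le_rfl
  rw [zero_smul, add_zero, add_zero, hαβ] at hle
  have hn : ‖α • Δ x + β • Δ y‖ = 1 := by
    have := norm_add_le (α • Δ x + β • Δ y) (Δ p)
    linarith
  obtain ⟨w, hw, hwΔ⟩ := hΔ.surj _ hn
  refine ⟨w, hw, hΔ.apply_eq_of_norm_map_add_map_peak hw hγ ?_, hwΔ⟩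
  refine le_antisymm ((norm_add_le _ _).trans (by rw [hΔ.norm_map w hw, np]; norm_num)) ?_
  rwa [hwΔ]

/-- `φ` is a norm-one functional supporting the image of the face `{x | x γ = z}`. -/
structure Supports (Δ : lp (fun _ : Γ => ℂ) ⊤ → Y) (γ : Γ) (z : ℂ) (φ : Y →ₗ[ℝ] ℝ) : Prop where
  abs_le : ∀ y, |φ y| ≤ ‖y‖
  map_eq_one : ∀ x, ‖x‖ = 1 → x γ = z → φ (Δ x) = 1

theorem exists_supports (hΔ : IsSphereIsometry Δ) (γ : Γ) {z : ℂ} (hz : ‖z‖ = 1) :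
    ∃ φ, Supports Δ γ z φ := by
  let E : Set Y := {u | ∃ x, ‖x‖ = 1 ∧ x γ = z ∧ Δ x = u}
  have hE : Convex ℝ E := by
    rintro _ ⟨x, hx, hxγ, rfl⟩ _ ⟨y, hy, hyγ, rfl⟩ α β hα hβ hαβ
    obtain ⟨w, hw, hwγ, hwΔ⟩ := hΔ.exists_map_eq_combo hx hy (hxγ ▸ hz) (hyγ.trans hxγ.symm)
      hα hβ hαβ
    exact ⟨w, hw, hwγ.trans hxγ, hwΔ⟩
  have hdisj : Disjoint (Metric.ball (0 : Y) 1) E := by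
    rw [Set.disjoint_left]
    rintro _ hu ⟨x, hx, -, rfl⟩
    rw [mem_ball_zero_iff, hΔ.norm_map x hx] at hu
    exact lt_irrefl _ hu
  obtain ⟨f, r, hf, hfE⟩ := geometric_hahn_banach_open (convex_ball (0 : Y) 1) Metric.isOpen_ball
    hE hdisj
  have hr : 0 < r := by simpa using hf 0 (by simp)
  have hlt : ∀ y, f y ≤ r * ‖y‖ := by
    intro y
    by_contra! hy
    have hy0 : 0 < f y := lt_of_le_of_lt (by positivity) hy
    have := hf ((r / f y) • y) (by
      rw [mem_ball_zero_iff, norm_smul, Real.norm_of_nonneg (by positivity), div_mul_eq_mul_div,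
        div_lt_one hy0]
      exact hy)
    rw [map_smul, smul_eq_mul, div_mul_cancel₀ _ hy0.ne'] at this
    exact lt_irrefl _ this
  have habs : ∀ y, |r⁻¹ * f y| ≤ ‖y‖ := by
    intro y
    have h1 := hlt y
    have h2 := hlt (-y)
    rw [map_neg, norm_neg] at h2
    rw [abs_mul, abs_of_pos (inv_pos.2 hr), inv_mul_le_iff₀ hr, abs_le]
    constructor <;> linarith
  refine ⟨r⁻¹ • f.toLinearMap, habs, fun x hx hxγ => le_antisymm ?_ ?_⟩
  · have := (le_abs_self _).trans (habs (Δ x))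
    rwa [hΔ.norm_map x hx] at this
  · change 1 ≤ r⁻¹ * f (Δ x)
    rw [le_inv_mul_iff₀ hr, mul_one]
    exact hfE _ ⟨x, hx, hxγ, rfl⟩

namespace Supports

variable {γ : Γ} {z : ℂ} {φ : Y →ₗ[ℝ] ℝ}

theorem abs_map_sub_le (hφ : Supports Δ γ z φ) (hΔ : IsSphereIsometry Δ)
    {x y : lp (fun _ : Γ => ℂ) ⊤} (hx : ‖x‖ = 1) (hy : ‖y‖ = 1) :
    |φ (Δ x) - φ (Δ y)| ≤ ‖x - y‖ := by
  rw [← map_sub, ← hΔ.norm_map_sub x y hx hy]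
  exact hφ.abs_le _

theorem map_eq_neg_one (hφ : Supports Δ γ z φ) (hΔ : IsSphereIsometry Δ) (hz : ‖z‖ = 1)
    {x : lp (fun _ : Γ => ℂ) ⊤} (hx : ‖x‖ = 1) (hxγ : x γ = -z) : φ (Δ x) = -1 := by
  obtain ⟨w, hw, hwΔ⟩ := hΔ.exists_map_eq_neg hx
  have hwγ := hΔ.apply_eq_neg_of_map_eq_neg hx hw (γ := γ) (by rw [hxγ, norm_neg, hz]) hwΔ
  have := hφ.map_eq_one w hw (by rw [hwγ, hxγ, neg_neg])
  rw [hwΔ, map_neg] at this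
  linarith

theorem le_map (hφ : Supports Δ γ z φ) (hΔ : IsSphereIsometry Δ) (hz : ‖z‖ = 1)
    {x : lp (fun _ : Γ => ℂ) ⊤} (hx : ‖x‖ = 1) : 1 - ‖z - x γ‖ ≤ φ (Δ x) := by
  have hu := norm_update_eq_one hx γ hz
  have h1 := hφ.abs_map_sub_le hΔ hx hu
  rw [hφ.map_eq_one _ hu (update_self _ _ _)] at h1
  have h2 := norm_sub_update_le x γ z
  rw [norm_sub_rev z]
  linarith [(_root_.abs_le.1 h1).1]

theorem map_le (hφ : Supports Δ γ z φ) (hΔ : IsSphereIsometry Δ) (hz : ‖z‖ = 1)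
    {x : lp (fun _ : Γ => ℂ) ⊤} (hx : ‖x‖ = 1) : φ (Δ x) ≤ ‖z + x γ‖ - 1 := by
  have hu := norm_update_eq_one hx γ (z := -z) (by rwa [norm_neg])
  have h1 := hφ.abs_map_sub_le hΔ hx hu
  rw [hφ.map_eq_neg_one hΔ hz hu (update_self _ _ _)] at h1
  have h2 := norm_sub_update_le x γ (-z)
  rw [sub_neg_eq_add, add_comm (x γ)] at h2
  linarith [(_root_.abs_le.1 h1).2]

theorem map_eq_of_apply_eq_smul (hφ : Supports Δ γ z φ) (hΔ : IsSphereIsometry Δ) (hz : ‖z‖ = 1)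
    {x : lp (fun _ : Γ => ℂ) ⊤} (hx : ‖x‖ = 1) {r : ℝ} (hr : |r| ≤ 1) (h : x γ = r • z) :
    φ (Δ x) = r := by
  have h1 := hφ.le_map hΔ hz hx
  have h2 := hφ.map_le hΔ hz hx
  have e1 : z - r • z = (1 - r) • z := by module
  have e2 : z + r • z = (1 + r) • z := by module
  obtain ⟨hr1, hr2⟩ := _root_.abs_le.1 hr
  rw [h, e1, norm_smul, hz, Real.norm_of_nonneg (by linarith)] at h1
  rw [h, e2, norm_smul, hz, Real.norm_of_nonneg (by linarith)] at h2
  linarith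

end Supports

theorem eq_zero_of_forall_abs_le_mul {D C : ℝ} (h : ∀ ε : ℝ, 0 < ε → ε ≤ 1 → |D| ≤ C * ε) : D = 0 := by
  by_contra hD
  have hD' : 0 < |D| := abs_pos.2 hD
  have hC : 0 < C := by linarith [h 1 one_pos le_rfl]
  have h1 := h (min 1 (|D| / (2 * C))) (by positivity) (min_le_left _ _)
  have h2 : C * min 1 (|D| / (2 * C)) ≤ C * (|D| / (2 * C)) :=
    mul_le_mul_of_nonneg_left (min_le_right _ _) hC.le
  have h3 : C * (|D| / (2 * C)) = |D| / 2 := by field_simp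
  linarith

/-- The supporting functionals at `γ` recover the coordinate `x γ` if `x` has modulus one at some
other point. -/
theorem map_eq_of_norm_apply_eq_one (hΔ : IsSphereIsometry Δ) {γ δ : Γ} (hδ : δ ≠ γ)
    {φ : ℂ → Y →ₗ[ℝ] ℝ} (hφ : ∀ z, ‖z‖ = 1 → Supports Δ γ z (φ z))
    {x : lp (fun _ : Γ => ℂ) ⊤} (hx : ‖x‖ = 1) (hxδ : ‖x δ‖ = 1) {z : ℂ} (hz : ‖z‖ = 1) :
    φ z (Δ x) = z.re * (x γ).re + z.im * (x γ).im := by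
  set c := update x γ 0 with hc
  have hcn : ‖c‖ = 1 := norm_update_eq_one_of_ne hx hδ hxδ (by simp)
  have hcδ : c δ = x δ := update_of_ne x hδ 0
  have hc0 : ∀ z, ‖z‖ = 1 → φ z (Δ c) = 0 := fun z hz =>
    (hφ z hz).map_eq_of_apply_eq_smul hΔ hz hcn (r := 0) (by simp) (by simp [hc])
  have hg1 : ∀ z, ‖z‖ = 1 → |φ z (Δ x)| ≤ ‖x γ‖ := fun z hz => by
    have := (hφ z hz).abs_map_sub_le hΔ hx hcn
    rw [hc0 z hz, sub_zero] at this
    simpa using this.trans (norm_sub_update_le x γ 0)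
  have hxγ : ‖x γ‖ ≤ 1 := (norm_apply_le x γ).trans hx.le
  have happrox : ∀ ε : ℝ, 0 < ε → ε ≤ 1 → ∃ w : ℂ, ∀ z, ‖z‖ = 1 →
      |ε * φ z (Δ x) - (z.re * w.re + z.im * w.im)| ≤ ε ^ 2 / 2 := by
    intro ε hε hε1
    obtain ⟨y, hy, -, hyΔ⟩ := hΔ.exists_map_eq_combo hcn hx (hcδ ▸ hxδ) hcδ.symm
      (sub_nonneg.2 hε1) hε.le (sub_add_cancel 1 ε)
    have hyφ : ∀ z, ‖z‖ = 1 → φ z (Δ y) = ε * φ z (Δ x) := fun z hz => by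
      rw [hyΔ, map_add, map_smul, map_smul, hc0 z hz]
      simp
    refine ⟨y γ, fun z hz => ?_⟩
    have hyγ : ‖y γ‖ ≤ ε := by
      obtain ⟨u, hu, hyu⟩ := Complex.exists_eq_norm_mul (y γ)
      have h1 := (hφ u hu).map_eq_of_apply_eq_smul hΔ hu hy
        (by rw [abs_norm]; exact (norm_apply_le y γ).trans hy.le) hyu
      rw [hyφ u hu] at h1
      have h2 := (le_abs_self _).trans ((hg1 u hu).trans hxγ)
      nlinarith
    have h1 := (hφ z hz).le_map hΔ hz hy
    have h2 := (hφ z hz).map_le hΔ hz hy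
    rw [hyφ z hz] at h1 h2
    have h3 := Complex.norm_sub_le_of_norm_eq_one (w := y γ) hz
    have h4 := Complex.norm_sub_le_of_norm_eq_one (w := -y γ) hz
    rw [sub_neg_eq_add, norm_neg, Complex.neg_re, Complex.neg_im] at h4
    have h5 : ‖y γ‖ ^ 2 ≤ ε ^ 2 := pow_le_pow_left₀ (norm_nonneg _) hyγ 2
    rw [abs_le]
    constructor <;> linarith
  set ζ : ℂ := ⟨φ 1 (Δ x), φ Complex.I (Δ x)⟩ with hζ
  have hlin : ∀ z, ‖z‖ = 1 → φ z (Δ x) = z.re * ζ.re + z.im * ζ.im := by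
    intro z hz
    refine sub_eq_zero.1 (eq_zero_of_forall_abs_le_mul (C := 3 / 2) fun ε hε hε1 => ?_)
    obtain ⟨w, hw⟩ := happrox ε hε hε1
    have h1 := hw z hz
    have h2 := hw 1 (by simp)
    have h3 := hw Complex.I (by simp)
    simp only [Complex.one_re, Complex.one_im, Complex.I_re, Complex.I_im, one_mul, zero_mul,
      add_zero, zero_add] at h2 h3
    have hre : |z.re| ≤ 1 := (Complex.abs_re_le_norm z).trans hz.le
    have him : |z.im| ≤ 1 := (Complex.abs_im_le_norm z).trans hz.le
    have h4 : |z.re * (ε * φ 1 (Δ x) - w.re)| ≤ ε ^ 2 / 2 := by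
      rw [abs_mul]
      exact (mul_le_of_le_one_left (abs_nonneg _) hre).trans h2
    have h5 : |z.im * (ε * φ Complex.I (Δ x) - w.im)| ≤ ε ^ 2 / 2 := by
      rw [abs_mul]
      exact (mul_le_of_le_one_left (abs_nonneg _) him).trans h3
    have h6 : ε * |φ z (Δ x) - (z.re * ζ.re + z.im * ζ.im)| ≤ ε * (3 / 2 * ε) := by
      rw [← abs_of_pos hε, ← abs_mul, abs_of_pos hε]
      have e : ε * (φ z (Δ x) - (z.re * ζ.re + z.im * ζ.im)) =
          (ε * φ z (Δ x) - (z.re * w.re + z.im * w.im)) -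
          z.re * (ε * φ 1 (Δ x) - w.re) - z.im * (ε * φ Complex.I (Δ x) - w.im) := by
        simp only [hζ]
        ring
      rw [e, abs_le]
      rw [abs_le] at h1 h4 h5
      constructor <;> nlinarith
    exact le_of_mul_le_mul_left h6 hε
  suffices h : ζ = x γ by rw [hlin z hz, h]
  have hζn : ‖ζ‖ ≤ ‖x γ‖ := by
    obtain ⟨u, hu, hζu⟩ := Complex.exists_eq_norm_mul ζ
    have h1 := (le_abs_self _).trans (hg1 u hu)
    have h2 : u.re ^ 2 + u.im ^ 2 = 1 := by
      rw [← one_pow 2, ← hu, Complex.sq_norm, Complex.normSq_apply]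
      ring
    have hre : ζ.re = ‖ζ‖ * u.re := by simpa using congrArg Complex.re hζu
    have him : ζ.im = ‖ζ‖ * u.im := by simpa using congrArg Complex.im hζu
    rw [hlin u hu, hre, him] at h1
    linear_combination h1 - ‖ζ‖ * h2
  obtain ⟨u, hu, hxu⟩ := Complex.exists_eq_norm_mul (x γ)
  have h1 := (hφ u hu).map_eq_of_apply_eq_smul hΔ hu hx (by rwa [abs_norm]) hxu
  rw [hlin u hu] at h1
  have hre : (x γ).re = ‖x γ‖ * u.re := by simpa using congrArg Complex.re hxu
  have him : (x γ).im = ‖x γ‖ * u.im := by simpa using congrArg Complex.im hxu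
  have h2 : ‖ζ - x γ‖ ^ 2 = ‖ζ‖ ^ 2 - 2 * (‖x γ‖ * (u.re * ζ.re + u.im * ζ.im)) + ‖x γ‖ ^ 2 := by
    rw [Complex.sq_norm, Complex.sq_norm, Complex.sq_norm, Complex.normSq_apply,
      Complex.normSq_apply, Complex.normSq_apply, Complex.sub_re, Complex.sub_im]
    linear_combination (-2 * ζ.re) * hre + (-2 * ζ.im) * him
  have h3 : ‖ζ - x γ‖ = 0 := by
    rw [h1] at h2
    nlinarith [norm_nonneg ζ, norm_nonneg (ζ - x γ)]
  exact sub_eq_zero.1 (norm_eq_zero.1 h3)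

theorem eq_of_forall_re_im_eq {a b : ℂ}
    (h : ∀ z : ℂ, ‖z‖ = 1 → z.re * a.re + z.im * a.im = z.re * b.re + z.im * b.im) : a = b := by
  have h1 := h 1 (by simp)
  have hI := h Complex.I (by simp)
  simp only [Complex.one_re, Complex.one_im, Complex.I_re, Complex.I_im, one_mul, zero_mul,
    add_zero, zero_add] at h1 hI
  exact Complex.ext h1 hI

theorem map_eq_of_nontrivial (hΔ : IsSphereIsometry Δ) {φ : Γ → ℂ → Y →ₗ[ℝ] ℝ}
    (hφ : ∀ γ z, ‖z‖ = 1 → Supports Δ γ z (φ γ z)) [Nontrivial Γ]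
    {x : lp (fun _ : Γ => ℂ) ⊤} (hx : ‖x‖ = 1) (γ : Γ) {z : ℂ} (hz : ‖z‖ = 1) :
    φ γ z (Δ x) = z.re * (x γ).re + z.im * (x γ).im := by
  by_cases hxγ : ‖x γ‖ = 1
  · obtain ⟨δ, hδ⟩ := exists_ne γ
    obtain ⟨u, hu, hxu⟩ := Complex.exists_eq_norm_mul (x δ)
    have hxδ := (norm_apply_le x δ).trans hx.le
    set α := (1 + ‖x δ‖) / 2 with hα
    set β := (1 - ‖x δ‖) / 2 with hβ
    have hu' : ‖-u‖ = 1 := by rwa [norm_neg]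
    have haγ : update x δ u γ = x γ := update_of_ne x hδ.symm u
    have hbγ : update x δ (-u) γ = x γ := update_of_ne x hδ.symm (-u)
    have ha := norm_update_eq_one hx δ hu
    have hb := norm_update_eq_one hx δ hu'
    obtain ⟨c, hc, hcγ, hcΔ⟩ := hΔ.exists_map_eq_combo ha hb (γ := γ) (haγ ▸ hxγ)
      (hbγ.trans haγ.symm) (α := α) (β := β) (by positivity) (by linarith) (by rw [hα, hβ]; ring)
    rw [haγ] at hcγ
    have hcx : c = x := by
      ext η
      by_cases hη : η = γ
      · rw [hη, hcγ]
      refine eq_of_forall_re_im_eq fun z hz => ?_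
      rw [← hΔ.map_eq_of_norm_apply_eq_one (Ne.symm hη) (hφ η) hc (hcγ ▸ hxγ) hz, hcΔ, map_add,
        map_smul, map_smul,
        hΔ.map_eq_of_norm_apply_eq_one (Ne.symm hη) (hφ η) ha (haγ ▸ hxγ) hz,
        hΔ.map_eq_of_norm_apply_eq_one (Ne.symm hη) (hφ η) hb (hbγ ▸ hxγ) hz]
      by_cases hηδ : η = δ
      · subst hηδ
        have hre : (x η).re = ‖x η‖ * u.re := by simpa using congrArg Complex.re hxu
        have him : (x η).im = ‖x η‖ * u.im := by simpa using congrArg Complex.im hxu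
        rw [update_self, update_self, hre, him, hα, hβ, smul_eq_mul, smul_eq_mul, Complex.neg_re,
          Complex.neg_im]
        ring
      · rw [update_of_ne x hηδ, update_of_ne x hηδ, hα, hβ, smul_eq_mul, smul_eq_mul]
        ring
    rw [← hcx, hcΔ, map_add, map_smul, map_smul,
      hΔ.map_eq_of_norm_apply_eq_one hδ (hφ γ) ha (by rwa [update_self]) hz,
      hΔ.map_eq_of_norm_apply_eq_one hδ (hφ γ) hb (by rwa [update_self]) hz, haγ, hbγ, hcγ, hα, hβ,
      smul_eq_mul, smul_eq_mul]
    ring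
  · have hlt : ‖x γ‖ < 1 := lt_of_le_of_ne ((norm_apply_le x γ).trans hx.le) hxγ
    refine sub_eq_zero.1 (eq_zero_of_forall_abs_le_mul (C := 1) fun ε hε _ => ?_)
    have hlub := hx ▸ lp.isLUB_norm x
    obtain ⟨_, ⟨δ, rfl⟩, hδlt, -⟩ := hlub.exists_between
      (max_lt hlt (sub_lt_self 1 hε))
    have hδ : δ ≠ γ := by
      rintro rfl
      exact absurd (lt_of_le_of_lt (le_max_left _ _) hδlt) (lt_irrefl _)
    obtain ⟨u, hu, hxu⟩ := Complex.exists_eq_norm_mul (x δ)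
    have hun := norm_update_eq_one hx δ hu
    have h1 := (hφ γ z hz).abs_map_sub_le hΔ hx hun
    rw [hΔ.map_eq_of_norm_apply_eq_one hδ (hφ γ) hun (by rwa [update_self]) hz,
      update_of_ne x hδ.symm] at h1
    have h2 := norm_sub_update_le x δ u
    have e : x δ - u = (‖x δ‖ - 1) • u := by
      rw [sub_smul, one_smul, ← hxu]
    rw [e, norm_smul, hu, mul_one, Real.norm_eq_abs, abs_of_nonpos
      (by linarith [(norm_apply_le x δ).trans hx.le])] at h2
    have h3 := lt_of_le_of_lt (le_max_right _ _) hδlt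
    linarith

theorem exists_functional_of_subsingleton (hΔ : IsSphereIsometry Δ) [Subsingleton Γ] (γ : Γ) {z : ℂ}
    (hz : ‖z‖ = 1) : ∃ φ : Y →ₗ[ℝ] ℝ, ∀ x, ‖x‖ = 1 →
      φ (Δ x) = z.re * (x γ).re + z.im * (x γ).im := by
  have hnorm : ∀ x : lp (fun _ : Γ => ℂ) ⊤, ‖x‖ = ‖x γ‖ := fun x =>
    le_antisymm (lp.norm_le_of_forall_le (norm_nonneg _) fun η => by rw [Subsingleton.elim η γ])
      (norm_apply_le x γ)
  have hpar : ∀ u v : Y, ‖u‖ = 1 → ‖v‖ = 1 → ‖u + v‖ ^ 2 + ‖u - v‖ ^ 2 = 4 := by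
    intro u v hu hv
    obtain ⟨x, hx, rfl⟩ := hΔ.surj u hu
    obtain ⟨y, hy, rfl⟩ := hΔ.surj v hv
    obtain ⟨w, hw, hwΔ⟩ := hΔ.exists_map_eq_neg hy
    have hwγ := hΔ.apply_eq_neg_of_map_eq_neg hy hw (γ := γ) (by rw [← hnorm, hy]) hwΔ
    have h1 : ‖Δ x + Δ y‖ = ‖x γ + y γ‖ := by
      rw [← sub_neg_eq_add, ← hwΔ, hΔ.norm_map_sub x w hx hw, hnorm, lp.coeFn_sub, Pi.sub_apply,
        hwγ, sub_neg_eq_add]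
    have h2 : ‖Δ x - Δ y‖ = ‖x γ - y γ‖ := by
      rw [hΔ.norm_map_sub x y hx hy, hnorm, lp.coeFn_sub, Pi.sub_apply]
    have h3 := parallelogram_law_with_norm ℝ (x γ) (y γ)
    rw [hnorm] at hx hy
    rw [hx, hy] at h3
    rw [h1, h2]
    linarith
  obtain ⟨φ, hφ⟩ := exists_linearMap_eq_polarization (parallelogram_of_unit_vectors hpar)
    (Δ (peak γ z))
  have hp := norm_peak γ hz
  refine ⟨φ, fun x hx => ?_⟩
  rw [hφ, hΔ.norm_map _ hp, hΔ.norm_map x hx, hΔ.norm_map_sub _ _ hp hx, hnorm, lp.coeFn_sub,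
    Pi.sub_apply, peak_self]
  rw [hnorm] at hx
  have h1 : ‖z - x γ‖ ^ 2 = ‖z‖ ^ 2 - 2 * (z.re * (x γ).re + z.im * (x γ).im) + ‖x γ‖ ^ 2 := by
    simp only [Complex.sq_norm, Complex.normSq_apply, Complex.sub_re, Complex.sub_im]
    ring
  rw [h1, hx, hz]
  ring

theorem exists_functional (hΔ : IsSphereIsometry Δ) :
    ∃ φ : Γ → ℂ → Y →ₗ[ℝ] ℝ, ∀ γ z, ‖z‖ = 1 → ∀ x, ‖x‖ = 1 →
      φ γ z (Δ x) = z.re * (x γ).re + z.im * (x γ).im := by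
  rcases subsingleton_or_nontrivial Γ with hΓ | hΓ
  · choose! φ hφ using fun (γ : Γ) (z : ℂ) (hz : ‖z‖ = 1) =>
      hΔ.exists_functional_of_subsingleton γ hz
    exact ⟨φ, hφ⟩
  · choose! φ hφ using fun (γ : Γ) (z : ℂ) (hz : ‖z‖ = 1) => hΔ.exists_supports γ hz
    exact ⟨φ, fun γ z hz x hx => hΔ.map_eq_of_nontrivial hφ hx γ hz⟩

end IsSphereIsometry

end EllInfty

/-- `ℓ_∞(Γ, ℂ)` (bounded complex functions on a non-empty set `Γ`
with the sup norm, realized as `lp (fun _ : Γ => ℂ) ∞`) satisfies the Mazur–Ulam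
property: every surjective isometry from its unit sphere onto the unit sphere of a
real Banach space `Y` extends to a surjective real-linear isometry onto `Y`. -/
theorem mazur_ulam_property_ell_infty
    {Γ : Type*} [Nonempty Γ]
    {Y : Type*} [NormedAddCommGroup Y] [NormedSpace ℝ Y] [CompleteSpace Y]
    (Δ : lp (fun _ : Γ => ℂ) ⊤ → Y)
    (hmap : ∀ x : lp (fun _ : Γ => ℂ) ⊤, ‖x‖ = 1 → ‖Δ x‖ = 1)
    (hsurj : ∀ y : Y, ‖y‖ = 1 → ∃ x : lp (fun _ : Γ => ℂ) ⊤, ‖x‖ = 1 ∧ Δ x = y)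
    (hiso : ∀ x y : lp (fun _ : Γ => ℂ) ⊤, ‖x‖ = 1 → ‖y‖ = 1 →
      ‖Δ x - Δ y‖ = ‖x - y‖) :
    ∃ T : lp (fun _ : Γ => ℂ) ⊤ → Y,
      (∀ x y : lp (fun _ : Γ => ℂ) ⊤, T (x + y) = T x + T y) ∧
      (∀ (r : ℝ) (x : lp (fun _ : Γ => ℂ) ⊤), T (r • x) = r • T x) ∧
      (∀ x : lp (fun _ : Γ => ℂ) ⊤, ‖T x‖ = ‖x‖) ∧
      Function.Surjective T ∧
      (∀ x : lp (fun _ : Γ => ℂ) ⊤, ‖x‖ = 1 → T x = Δ x) := by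
  have hΔ : EllInfty.IsSphereIsometry Δ := ⟨hmap, hsurj, hiso⟩
  obtain ⟨φ, hφ⟩ := hΔ.exists_functional
  have hsep : ∀ y : Y, (∀ γ z, ‖z‖ = 1 → φ γ z y = 0) → y = 0 := by
    intro y hy
    by_contra hy0
    have hn : ‖y‖ ≠ 0 := norm_ne_zero_iff.2 hy0
    obtain ⟨x, hx, hxΔ⟩ := hsurj (‖y‖⁻¹ • y) (by rw [norm_smul]; simp [hn])
    have hx0 : x = 0 := by
      ext γ
      refine EllInfty.IsSphereIsometry.eq_of_forall_re_im_eq fun z hz => ?_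
      rw [← hφ γ z hz x hx, hxΔ, map_smul, hy γ z hz]
      simp
    rw [hx0, norm_zero] at hx
    exact zero_ne_one hx
  have hunit : ∀ x : lp (fun _ : Γ => ℂ) ⊤, x ≠ 0 → ‖‖x‖⁻¹ • x‖ = 1 := fun x hx => by
    have : ‖x‖ ≠ 0 := norm_ne_zero_iff.2 hx
    rw [norm_smul, norm_inv, norm_norm, inv_mul_cancel₀ this]
  set T : lp (fun _ : Γ => ℂ) ⊤ → Y := fun x => ‖x‖ • Δ (‖x‖⁻¹ • x) with hT
  have hTφ : ∀ γ z, ‖z‖ = 1 → ∀ x, φ γ z (T x) = z.re * (x γ).re + z.im * (x γ).im := by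
    intro γ z hz x
    rcases eq_or_ne x 0 with rfl | hx
    · simp [hT]
    have hn : ‖x‖ ≠ 0 := norm_ne_zero_iff.2 hx
    simp only [hT]
    rw [map_smul, hφ γ z hz _ (hunit x hx), lp.coeFn_smul, Pi.smul_apply, Complex.smul_re,
      Complex.smul_im, smul_eq_mul, smul_eq_mul, smul_eq_mul]
    field_simp
  have hTΔ : ∀ x : lp (fun _ : Γ => ℂ) ⊤, ‖x‖ = 1 → T x = Δ x := fun x hx => by
    simp [hT, hx]
  have hTsmul : ∀ (r : ℝ) (x : lp (fun _ : Γ => ℂ) ⊤), T (r • x) = r • T x := by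
    intro r x
    refine sub_eq_zero.1 (hsep _ fun γ z hz => ?_)
    rw [map_sub, hTφ γ z hz, (φ γ z).map_smul, hTφ γ z hz, lp.coeFn_smul, Pi.smul_apply, Complex.smul_re,
      Complex.smul_im, smul_eq_mul, smul_eq_mul, smul_eq_mul]
    ring
  refine ⟨T, fun x y => ?_, hTsmul, fun x => ?_, fun y => ?_, hTΔ⟩
  · refine sub_eq_zero.1 (hsep _ fun γ z hz => ?_)
    rw [map_sub, map_add, hTφ γ z hz, hTφ γ z hz, hTφ γ z hz, lp.coeFn_add, Pi.add_apply,
      Complex.add_re, Complex.add_im]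
    ring
  · rcases eq_or_ne x 0 with rfl | hx
    · simp [hT]
    simp only [hT]
    rw [norm_smul, norm_norm, hmap _ (hunit x hx), mul_one]
  · rcases eq_or_ne y 0 with rfl | hy
    · exact ⟨0, by simp [hT]⟩
    have hn : ‖y‖ ≠ 0 := norm_ne_zero_iff.2 hy
    obtain ⟨x, hx, hxΔ⟩ := hsurj (‖y‖⁻¹ • y) (by rw [norm_smul]; simp [hn])
    refine ⟨‖y‖ • x, ?_⟩
    rw [hTsmul, hTΔ x hx, hxΔ, smul_smul, mul_inv_cancel₀ hn, one_smul]
end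

section
/- Let H be a complex Hilbert space with dim H ≥ 3, let B(H) be the algebra of bounded linear operators on H with the operator norm, and let Y be a real Banach space. Then every surjective isometry Δ : S(B(H)) → S(Y) between the unit spheres admits a unique extension to a surjective real-linear isometry from B(H) onto Y. (This is the von Neumann factor instance of the main theorem that every JBW*-triple of rank at least three satisfies the Mazur–Ulam property.) -/
open Metric Set

section ConvexIsometry

variable {X Y : Type*} [NormedAddCommGroup X] [NormedSpace ℝ X]
  [NormedAddCommGroup Y] [NormedSpace ℝ Y]

/-- A metric division point of a segment in an extreme direction is the affine one. -/
theorem eq_of_norm_sub_le_of_mem_extremePoints {v : X}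
    (hv : v ∈ extremePoints ℝ (closedBall (0 : X) 1)) {x y : X} {s θ : ℝ}
    (h0 : 0 < θ) (h1 : θ < 1) (hy : ‖y - x‖ ≤ θ * |s|)
    (hy' : ‖y - (x + s • v)‖ ≤ (1 - θ) * |s|) : y = x + (θ * s) • v := by
  rcases eq_or_ne s 0 with rfl | hs
  · have : ‖y - x‖ ≤ 0 := by simpa using hy
    simpa [sub_eq_zero] using this
  have h1' : 0 < 1 - θ := by linarith
  have hs' : 0 < |s| := abs_pos.mpr hs
  have key := (mem_extremePoints.mp hv).2 ((θ * s)⁻¹ • (y - x)) ?_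
    (((1 - θ) * s)⁻¹ • (x + s • v - y)) ?_ ⟨θ, 1 - θ, h0, h1', by ring, ?_⟩
  · rw [← key.1, smul_inv_smul₀ (by positivity)]
    abel
  · rw [mem_closedBall_zero_iff, norm_smul, norm_inv, Real.norm_eq_abs, abs_mul, abs_of_pos h0]
    exact inv_mul_le_one_of_le₀ hy (by positivity)
  · rw [mem_closedBall_zero_iff, norm_smul, norm_inv, Real.norm_eq_abs, abs_mul, abs_of_pos h1',
      norm_sub_rev]
    exact inv_mul_le_one_of_le₀ hy' (by positivity)
  · rw [mul_inv, mul_inv, mul_smul, mul_smul, smul_inv_smul₀ h0.ne', smul_inv_smul₀ h1'.ne',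
      ← smul_add]
    rw [sub_add_sub_comm, add_sub_assoc]
    simp [hs]

theorem norm_smul_le_abs_of_mem_extremePoints {v : X}
    (hv : v ∈ extremePoints ℝ (closedBall (0 : X) 1)) (s : ℝ) : ‖s • v‖ ≤ |s| := by
  rw [norm_smul, Real.norm_eq_abs]
  exact mul_le_of_le_one_right (abs_nonneg s) (mem_closedBall_zero_iff.mp hv.1)

variable {f : X → Y}

theorem map_segment_of_mem_extremePoints
    (hf : ∀ x ∈ closedBall (0 : X) 1, ∀ y ∈ closedBall (0 : X) 1, ‖f x - f y‖ = ‖x - y‖)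
    (hc : Convex ℝ (f '' closedBall 0 1)) {v : X}
    (hv : v ∈ extremePoints ℝ (closedBall (0 : X) 1)) {x : X} {s θ : ℝ}
    (hx : x ∈ closedBall (0 : X) 1) (hxs : x + s • v ∈ closedBall (0 : X) 1)
    (h0 : 0 ≤ θ) (h1 : θ ≤ 1) :
    f (x + (θ * s) • v) = (1 - θ) • f x + θ • f (x + s • v) := by
  rcases h0.eq_or_lt with rfl | h0
  · simp
  rcases h1.eq_or_lt with rfl | h1
  · simp
  have h1' : 0 < 1 - θ := by linarith
  obtain ⟨y, hy, hfy⟩ := hc (mem_image_of_mem f hx) (mem_image_of_mem f hxs) h1'.le h0.le (by ring)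
  have hd : ‖f (x + s • v) - f x‖ ≤ |s| := by
    rw [hf _ hxs _ hx, add_sub_cancel_left]
    exact norm_smul_le_abs_of_mem_extremePoints hv s
  have hy1 : ‖y - x‖ ≤ θ * |s| := by
    rw [← hf _ hy _ hx, hfy, show (1 - θ) • f x + θ • f (x + s • v) - f x
      = θ • (f (x + s • v) - f x) by module, norm_smul, Real.norm_eq_abs, abs_of_pos h0]
    gcongr
  have hy2 : ‖y - (x + s • v)‖ ≤ (1 - θ) * |s| := by
    rw [← hf _ hy _ hxs, hfy, show (1 - θ) • f x + θ • f (x + s • v) - f (x + s • v)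
      = -((1 - θ) • (f (x + s • v) - f x)) by module, norm_neg, norm_smul, Real.norm_eq_abs,
      abs_of_pos h1']
    gcongr
  rw [← eq_of_norm_sub_le_of_mem_extremePoints hv h0 h1 hy1 hy2, hfy]

theorem map_midpoint_of_mem_extremePoints
    (hf : ∀ x ∈ closedBall (0 : X) 1, ∀ y ∈ closedBall (0 : X) 1, ‖f x - f y‖ = ‖x - y‖)
    (hc : Convex ℝ (f '' closedBall 0 1)) {v : X}
    (hv : v ∈ extremePoints ℝ (closedBall (0 : X) 1)) {x : X} {s : ℝ}
    (hx : x ∈ closedBall (0 : X) 1) (hxs : x + s • v ∈ closedBall (0 : X) 1) :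
    f (x + (1 / 2 * s) • v) = (1 / 2 : ℝ) • (f x + f (x + s • v)) := by
  rw [map_segment_of_mem_extremePoints hf hc hv hx hxs (by norm_num) (by norm_num)]
  module

/-- Parallelograms with sides in extreme directions are mapped to parallelograms. -/
theorem map_parallelogram_of_mem_extremePoints
    (hf : ∀ x ∈ closedBall (0 : X) 1, ∀ y ∈ closedBall (0 : X) 1, ‖f x - f y‖ = ‖x - y‖)
    (hc : Convex ℝ (f '' closedBall 0 1)) {u v : X}
    (hu : u ∈ extremePoints ℝ (closedBall (0 : X) 1))
    (hv : v ∈ extremePoints ℝ (closedBall (0 : X) 1)) {x : X} {s t : ℝ}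
    (hx : x ∈ closedBall (0 : X) 1) (hxs : x + s • u ∈ closedBall (0 : X) 1)
    (hxt : x + t • v ∈ closedBall (0 : X) 1) (hxst : x + s • u + t • v ∈ closedBall (0 : X) 1) :
    f (x + s • u + t • v) - f (x + s • u) = f (x + t • v) - f x := by
  have hhalf : ∀ {a b : X}, a ∈ closedBall (0 : X) 1 → b ∈ closedBall (0 : X) 1 →
      (1 / 2 : ℝ) • (a + b) ∈ closedBall (0 : X) 1 := fun ha hb => by
    rw [smul_add]
    exact convex_closedBall 0 1 ha hb (by norm_num) (by norm_num) (by norm_num)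
  have e1 := map_midpoint_of_mem_extremePoints hf hc hv hx hxt
  have e2 := map_midpoint_of_mem_extremePoints hf hc hv hxs hxst
  have hm1 : x + (1 / 2 * t) • v ∈ closedBall (0 : X) 1 := by
    convert hhalf hx hxt using 1
    module
  have hm2 : x + (1 / 2 * t) • v + s • u ∈ closedBall (0 : X) 1 := by
    convert hhalf hxs hxst using 1
    module
  have hcomm : x + s • u + (1 / 2 * t) • v = x + (1 / 2 * t) • v + s • u := by abel
  rw [hcomm] at e2
  have e3 := map_midpoint_of_mem_extremePoints hf hc hu hm1 hm2
  obtain ⟨y, hy, hfy⟩ := hc (mem_image_of_mem f hx) (mem_image_of_mem f hxst)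
    (show (0 : ℝ) ≤ 1 / 2 by norm_num) (show (0 : ℝ) ≤ 1 / 2 by norm_num) (by norm_num)
  have hy1 : ‖y - (x + (1 / 2 * t) • v)‖ ≤ 1 / 2 * |s| := by
    rw [← hf _ hy _ hm1, hfy, e1,
      show (1 / 2 : ℝ) • f x + (1 / 2 : ℝ) • f (x + s • u + t • v)
        - (1 / 2 : ℝ) • (f x + f (x + t • v))
        = (1 / 2 : ℝ) • (f (x + s • u + t • v) - f (x + t • v)) by module, norm_smul,
      hf _ hxst _ hxt, show x + s • u + t • v - (x + t • v) = s • u by abel]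
    have := norm_smul_le_abs_of_mem_extremePoints hu s
    norm_num at this ⊢
    linarith
  have hy2 : ‖y - (x + (1 / 2 * t) • v + s • u)‖ ≤ (1 - 1 / 2) * |s| := by
    rw [← hf _ hy _ hm2, hfy, e2,
      show (1 / 2 : ℝ) • f x + (1 / 2 : ℝ) • f (x + s • u + t • v)
        - (1 / 2 : ℝ) • (f (x + s • u) + f (x + s • u + t • v))
        = (1 / 2 : ℝ) • (f x - f (x + s • u)) by module, norm_smul,
      hf _ hx _ hxs, sub_add_cancel_left, norm_neg]
    have := norm_smul_le_abs_of_mem_extremePoints hu s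
    norm_num at this ⊢
    linarith
  rw [eq_of_norm_sub_le_of_mem_extremePoints hu (by norm_num) (by norm_num) hy1 hy2, e3, e1, e2]
    at hfy
  have h4 := congrArg (fun z => (4 : ℝ) • z) hfy
  rw [← sub_eq_zero] at h4 ⊢
  rw [← neg_eq_zero]
  rw [← h4]
  module

/-- The properties of isometries with convex image which force affinity: affinity on segments
and preservation of parallelograms, both with sides in directions from a set `E`. -/
structure IsAffineAlong (E : Set X) (f : X → Y) : Prop where
  segment : ∀ v ∈ E, ∀ (x : X) (s θ : ℝ), x ∈ closedBall (0 : X) 1 →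
    x + s • v ∈ closedBall (0 : X) 1 → 0 ≤ θ → θ ≤ 1 →
    f (x + (θ * s) • v) = (1 - θ) • f x + θ • f (x + s • v)
  parallelogram : ∀ u ∈ E, ∀ v ∈ E, ∀ (x : X) (s t : ℝ), x ∈ closedBall (0 : X) 1 →
    x + s • u ∈ closedBall (0 : X) 1 → x + t • v ∈ closedBall (0 : X) 1 →
    x + s • u + t • v ∈ closedBall (0 : X) 1 →
    f (x + s • u + t • v) - f (x + s • u) = f (x + t • v) - f x

variable {E : Set X}

theorem IsAffineAlong.of_isometry (hE : E ⊆ extremePoints ℝ (closedBall (0 : X) 1))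
    (hf : ∀ x ∈ closedBall (0 : X) 1, ∀ y ∈ closedBall (0 : X) 1, ‖f x - f y‖ = ‖x - y‖)
    (hc : Convex ℝ (f '' closedBall 0 1)) : IsAffineAlong E f where
  segment _ hv _ _ _ hx hxs h0 h1 := map_segment_of_mem_extremePoints hf hc (hE hv) hx hxs h0 h1
  parallelogram _ hu _ hv _ _ _ hx hxs hxt hxst :=
    map_parallelogram_of_mem_extremePoints hf hc (hE hu) (hE hv) hx hxs hxt hxst

theorem IsAffineAlong.comp_homothety (h : IsAffineAlong E f) {c : X} {r : ℝ} (hr : 0 ≤ r)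
    (hcr : ‖c‖ + r ≤ 1) : IsAffineAlong E fun x => f (c + r • x) := by
  have hmem : ∀ {x : X}, x ∈ closedBall (0 : X) 1 → c + r • x ∈ closedBall (0 : X) 1 := by
    intro x hx
    rw [mem_closedBall_zero_iff] at hx ⊢
    calc ‖c + r • x‖ ≤ ‖c‖ + r * ‖x‖ := by
          simpa [norm_smul, abs_of_nonneg hr] using norm_add_le c (r • x)
      _ ≤ 1 := by nlinarith
  constructor
  · intro v hv x s θ hx hxs h0 h1
    have := h.segment v hv (c + r • x) (r * s) θ (hmem hx)
      (by convert hmem hxs using 1; module) h0 h1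
    rw [show c + r • (x + (θ * s) • v) = c + r • x + (θ * (r * s)) • v by module,
      show c + r • (x + s • v) = c + r • x + (r * s) • v by module]
    exact this
  · intro u hu v hv x s t hx hxs hxt hxst
    have := h.parallelogram u hu v hv (c + r • x) (r * s) (r * t) (hmem hx)
      (by convert hmem hxs using 1; module) (by convert hmem hxt using 1; module)
      (by convert hmem hxst using 1; module)
    convert this using 3 <;> module

theorem IsAffineAlong.map_smul_sub (h : IsAffineAlong E f) (hE1 : E ⊆ closedBall (0 : X) 1)
    {v : X} (hv : v ∈ E) {t : ℝ} (ht : |t| ≤ 1) : f (t • v) - f 0 = t • (f v - f 0) := by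
  have hvb := hE1 hv
  have hnb : -v ∈ closedBall (0 : X) 1 := by simpa using hvb
  have h0b : (0 : X) ∈ closedBall (0 : X) 1 := by simp
  have hneg : f (-v) - f 0 = -(f v - f 0) := by
    have := h.segment v hv (-v) 2 (1 / 2) hnb (by convert hvb using 1; module) (by norm_num)
      (by norm_num)
    rw [show -v + (1 / 2 * 2 : ℝ) • v = 0 by module, show -v + (2 : ℝ) • v = v by module] at this
    rw [this]
    have h2 : f (-v) = (2 : ℝ) • f 0 - f v := by rw [this]; module
    rw [← sub_eq_zero]
    module
  rcases le_total 0 t with h0 | h0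
  · have := h.segment v hv 0 1 t h0b (by simpa using hvb) h0 (le_of_abs_le ht)
    simp only [mul_one, zero_add, one_smul] at this
    rw [this]
    module
  · have := h.segment v hv 0 (-1) (-t) h0b (by simpa using hvb) (by linarith)
      (by linarith [neg_le_of_abs_le ht])
    simp only [mul_neg, mul_one, neg_neg, zero_add, neg_smul, one_smul] at this
    rw [this, show f (-v) = -(f v - f 0) + f 0 by rw [← hneg]; abel]
    module

theorem norm_sum_smul_le {ι : Type*} (s : Finset ι) (t : ι → ℝ) {v : ι → X}
    (hv : ∀ i, ‖v i‖ ≤ 1) : ‖∑ i ∈ s, t i • v i‖ ≤ ∑ i ∈ s, |t i| :=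
  norm_sum_le_of_le s fun i _ => by
    rw [norm_smul, Real.norm_eq_abs]
    exact mul_le_of_le_one_right (abs_nonneg _) (hv i)

theorem IsAffineAlong.map_sum_add (h : IsAffineAlong E f) (hE1 : E ⊆ closedBall (0 : X) 1)
    {ι : Type*} (s : Finset ι) (t : ι → ℝ) {v : ι → X} (hv : ∀ i, v i ∈ E) {w : X} (hw : w ∈ E)
    {r : ℝ} (hr : ∑ i ∈ s, |t i| + |r| ≤ 1) :
    f (∑ i ∈ s, t i • v i + r • w) - f (∑ i ∈ s, t i • v i) = f (r • w) - f 0 := by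
  classical
  have hv1 : ∀ i, ‖v i‖ ≤ 1 := fun i => mem_closedBall_zero_iff.mp (hE1 (hv i))
  have hw1 : ‖r • w‖ ≤ |r| := by
    rw [norm_smul, Real.norm_eq_abs]
    exact mul_le_of_le_one_right (abs_nonneg _) (mem_closedBall_zero_iff.mp (hE1 hw))
  induction s using Finset.induction_on with
  | empty => simp
  | insert a s ha ih =>
    rw [Finset.sum_insert ha] at hr
    have ht1 : ‖t a • v a‖ ≤ |t a| := by
      rw [norm_smul, Real.norm_eq_abs]
      exact mul_le_of_le_one_right (abs_nonneg _) (hv1 a)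
    have hs := norm_sum_smul_le s t hv1
    have a1 := abs_nonneg (t a)
    have a2 := abs_nonneg r
    rw [← ih (by linarith), Finset.sum_insert ha, add_comm (t a • v a)]
    apply h.parallelogram _ (hv a) _ hw <;> rw [mem_closedBall_zero_iff]
    · linarith
    · linarith [norm_add_le (∑ i ∈ s, t i • v i) (t a • v a)]
    · linarith [norm_add_le (∑ i ∈ s, t i • v i) (r • w)]
    · linarith [norm_add_le (∑ i ∈ s, t i • v i) (t a • v a),
        norm_add_le (∑ i ∈ s, t i • v i + t a • v a) (r • w)]

theorem IsAffineAlong.map_sum_sub (h : IsAffineAlong E f) (hE1 : E ⊆ closedBall (0 : X) 1)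
    {ι : Type*} (s : Finset ι) (t : ι → ℝ) {v : ι → X} (hv : ∀ i, v i ∈ E)
    (ht : ∑ i ∈ s, |t i| ≤ 1) :
    f (∑ i ∈ s, t i • v i) - f 0 = ∑ i ∈ s, t i • (f (v i) - f 0) := by
  classical
  induction s using Finset.induction_on with
  | empty => simp
  | insert a s ha ih =>
    rw [Finset.sum_insert ha] at ht
    have a1 := abs_nonneg (t a)
    have a2 : 0 ≤ ∑ i ∈ s, |t i| := Finset.sum_nonneg fun i _ => abs_nonneg _
    rw [Finset.sum_insert ha, Finset.sum_insert ha, ← ih (by linarith),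
      ← h.map_smul_sub hE1 (hv a) (by linarith), add_comm (t a • v a),
      ← h.map_sum_add hE1 s t hv (hv a) (by linarith)]
    abel

/-- If the absolutely convex hull of `E` contains a ball of radius `κ`, then maps affine along `E`
are affine on that ball. -/
theorem IsAffineAlong.exists_linear_on_small_ball (h : IsAffineAlong E f)
    (hE1 : E ⊆ closedBall (0 : X) 1)
    (hspan : ∀ x : X, ∃ (t : Fin 4 → ℝ) (v : Fin 4 → X),
      (∀ i, v i ∈ E) ∧ ∑ i, |t i| ≤ 2 * ‖x‖ ∧ x = ∑ i, t i • v i) :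
    ∃ G : X →ₗ[ℝ] Y, ∀ x, ‖x‖ ≤ 1 / 2 → f x = f 0 + G x := by
  let S : (E →₀ ℝ) →ₗ[ℝ] X := Finsupp.linearCombination ℝ (fun v : E => (v : X))
  let L : (E →₀ ℝ) →ₗ[ℝ] Y := Finsupp.linearCombination ℝ (fun v : E => f v - f 0)
  have hker : LinearMap.ker S ≤ LinearMap.ker L := by
    intro t ht
    rw [LinearMap.mem_ker] at ht ⊢
    set M : ℝ := 1 + ∑ i ∈ t.support, |t i|
    have hM : 0 < M := by positivity
    have := h.map_sum_sub hE1 t.support (fun i => M⁻¹ * t i) (v := fun i => (i : X))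
      (fun i => i.2) (by
        simp_rw [abs_mul, ← Finset.mul_sum, abs_inv, abs_of_pos hM]
        exact inv_mul_le_one_of_le₀ (by simp [M]) hM.le)
    simp_rw [mul_smul, ← Finset.smul_sum] at this
    have e1 : ∑ i ∈ t.support, t i • (i : X) = 0 := ht
    have e2 : ∑ i ∈ t.support, t i • (f i - f 0) = L t := rfl
    rw [e1, e2, smul_zero, sub_self, eq_comm, smul_eq_zero] at this
    exact this.resolve_left (inv_ne_zero hM.ne')
  have hS : LinearMap.range S = ⊤ := by
    rw [LinearMap.range_eq_top]
    intro x
    obtain ⟨t, v, hv, -, rfl⟩ := hspan x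
    refine ⟨∑ i, Finsupp.single ⟨v i, hv i⟩ (t i), ?_⟩
    simp [S]
  obtain ⟨R, hR⟩ := S.exists_rightInverse_of_surjective hS
  refine ⟨L ∘ₗ R, fun x hx => ?_⟩
  obtain ⟨t, v, hv, ht, hxt⟩ := hspan x
  have e1 := h.map_sum_sub hE1 Finset.univ t hv (by linarith)
  rw [← hxt] at e1
  have e2 : L (R x) = ∑ i, t i • (f (v i) - f 0) := by
    have : L (R x - ∑ i, Finsupp.single ⟨v i, hv i⟩ (t i)) = 0 := by
      apply hker
      rw [LinearMap.mem_ker, map_sub, sub_eq_zero]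
      have := LinearMap.congr_fun hR x
      simp only [LinearMap.comp_apply, LinearMap.id_apply] at this
      rw [this]
      conv_lhs => rw [hxt]
      simp [S]
    rw [map_sub, sub_eq_zero] at this
    rw [this]
    simp [L]
  rw [LinearMap.comp_apply, e2, ← e1]
  abel

theorem IsAffineAlong.exists_linear_on_ball (h : IsAffineAlong E f)
    (hE1 : E ⊆ closedBall (0 : X) 1)
    (hspan : ∀ x : X, ∃ (t : Fin 4 → ℝ) (v : Fin 4 → X),
      (∀ i, v i ∈ E) ∧ ∑ i, |t i| ≤ 2 * ‖x‖ ∧ x = ∑ i, t i • v i) :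
    ∃ G : X →ₗ[ℝ] Y, ∀ x, ‖x‖ < 1 → f x = f 0 + G x := by
  obtain ⟨G, hG⟩ := h.exists_linear_on_small_ball hE1 hspan
  refine ⟨G, ?_⟩
  have step : ∀ r : ℝ, 1 / 2 ≤ r → r < 1 → (∀ x, ‖x‖ ≤ r → f x = f 0 + G x) →
      ∀ x, ‖x‖ ≤ (1 + r) / 2 → f x = f 0 + G x := by
    intro r hr hr1 ih x hx
    rcases le_or_gt ‖x‖ r with hxr | hxr
    · exact ih x hxr
    have hx0 : 0 < ‖x‖ := by linarith
    have hr0 : 0 < 1 - r := by linarith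
    obtain ⟨z, hz, hxz⟩ : ∃ z : X, ‖z‖ = 1 ∧ ‖x‖ • z = x :=
      ⟨‖x‖⁻¹ • x, by simp [norm_smul, hx0.ne'], by simp [hx0.ne']⟩
    have hn : ∀ a : ℝ, ‖a • z‖ = |a| := fun a => by rw [norm_smul, hz, mul_one, Real.norm_eq_abs]
    obtain ⟨K, hK⟩ := (h.comp_homothety (c := r • z) hr0.le (by
      rw [hn, abs_of_pos (by linarith)]; linarith)).exists_linear_on_small_ball hE1 hspan
    simp only [smul_zero, add_zero] at hK
    have hK1 := hK ((-(1 / 2) : ℝ) • z) (by rw [hn]; norm_num)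
    have hK2 := hK (((‖x‖ - r) / (1 - r)) • z) (by
      rw [hn, abs_of_nonneg (div_nonneg (by linarith) hr0.le), div_le_iff₀ hr0]; linarith)
    rw [show r • z + (1 - r) • ((‖x‖ - r) / (1 - r)) • z = x by
      rw [smul_smul, mul_div_cancel₀ _ hr0.ne', ← add_smul, add_sub_cancel, hxz]] at hK2
    rw [show r • z + (1 - r) • (-(1 / 2) : ℝ) • z = (r - (1 - r) / 2) • z by module,
      ih _ (by rw [hn, abs_of_pos (by linarith)]; linarith),
      ih (r • z) (by rw [hn, abs_of_pos (by linarith)])] at hK1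
    rw [ih (r • z) (by rw [hn, abs_of_pos (by linarith)])] at hK2
    rw [map_smul, map_smul, map_smul] at hK1
    rw [map_smul, map_smul] at hK2
    have hKz : K z = (1 - r) • G z := by
      have h2 := congrArg (fun y => (-2 : ℝ) • (y - f 0 - r • G z)) hK1
      calc K z = (-2 : ℝ) • (f 0 + r • G z + -(1 / 2 : ℝ) • K z - f 0 - r • G z) := by module
        _ = _ := by rw [← h2]; module
    rw [hK2, hKz, smul_smul, div_mul_cancel₀ _ hr0.ne', add_assoc, ← add_smul,
      add_sub_cancel, ← map_smul, hxz]
  have hind : ∀ n : ℕ, ∀ x, ‖x‖ ≤ 1 - (1 / 2) ^ (n + 1) → f x = f 0 + G x := by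
    intro n
    induction n with
    | zero => intro x hx; exact hG x (by norm_num at hx ⊢; exact hx)
    | succ n ih =>
      intro x hx
      have h1 : (1 / 2 : ℝ) ^ (n + 1) ≤ 1 / 2 := by
        rw [pow_succ]
        nlinarith [pow_le_one₀ (n := n) (show (0 : ℝ) ≤ 1 / 2 by norm_num) (by norm_num)]
      have h2 : (0 : ℝ) < (1 / 2) ^ (n + 1) := by positivity
      refine step _ (by linarith) (by linarith) ih x (hx.trans_eq ?_)
      ring
  intro x hx
  obtain ⟨n, hn⟩ := exists_pow_lt_of_lt_one (sub_pos.mpr hx) (show (1 / 2 : ℝ) < 1 by norm_num)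
  refine hind n x ?_
  have : (1 / 2 : ℝ) ^ (n + 1) ≤ (1 / 2) ^ n :=
    pow_le_pow_of_le_one (by norm_num) (by norm_num) n.le_succ
  linarith

/-- An isometry of the closed unit ball onto a convex set is affine, provided that the ball is,
up to a factor, the absolutely convex hull of its extreme points. -/
theorem exists_linear_of_isometry_of_convex_image
    (hE : E ⊆ extremePoints ℝ (closedBall (0 : X) 1))
    (hspan : ∀ x : X, ∃ (t : Fin 4 → ℝ) (v : Fin 4 → X),
      (∀ i, v i ∈ E) ∧ ∑ i, |t i| ≤ 2 * ‖x‖ ∧ x = ∑ i, t i • v i)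
    (hf : ∀ x ∈ closedBall (0 : X) 1, ∀ y ∈ closedBall (0 : X) 1, ‖f x - f y‖ = ‖x - y‖)
    (hc : Convex ℝ (f '' closedBall 0 1)) :
    ∃ G : X →ₗ[ℝ] Y, ∀ x, ‖x‖ ≤ 1 → f x = f 0 + G x := by
  obtain ⟨G, hG⟩ := (IsAffineAlong.of_isometry hE hf hc).exists_linear_on_ball
    (fun v hv => (hE hv).1) hspan
  refine ⟨G, fun x hx => ?_⟩
  have hle : ∀ t : ℝ, 0 < t → t < 1 → ‖f x - (f 0 + G x)‖ ≤ t * (‖x‖ + ‖G x‖) := by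
    intro t h0 h1
    have hlt : ‖(1 - t) • x‖ < 1 := by
      rw [norm_smul, Real.norm_eq_abs, abs_of_pos (by linarith)]
      nlinarith [norm_nonneg x]
    have e1 := hG _ hlt
    have e2 := hf x (by simpa using hx) ((1 - t) • x) (by simpa using hlt.le)
    rw [show x - (1 - t) • x = t • x by module, norm_smul, Real.norm_eq_abs, abs_of_pos h0] at e2
    calc ‖f x - (f 0 + G x)‖ = ‖(f x - f ((1 - t) • x)) - t • G x‖ := by
          rw [e1, map_smul]; congr 1; module
      _ ≤ t * ‖x‖ + t * ‖G x‖ := by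
          rw [← e2]
          simpa [norm_smul, abs_of_pos h0] using norm_sub_le (f x - f ((1 - t) • x)) (t • G x)
      _ = _ := by ring
  have hlim : Filter.Tendsto (fun t : ℝ => t * (‖x‖ + ‖G x‖)) (nhdsWithin 0 (Ioi 0))
      (nhds 0) := by
    have : ContinuousAt (fun t : ℝ => t * (‖x‖ + ‖G x‖)) 0 := by fun_prop
    simpa using this.tendsto.mono_left nhdsWithin_le_nhds
  have : ‖f x - (f 0 + G x)‖ ≤ 0 := by
    refine ge_of_tendsto hlim ?_
    filter_upwards [Ioo_mem_nhdsGT (show (0 : ℝ) < 1 by norm_num)] with t ht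
    exact hle t ht.1 ht.2
  simpa [sub_eq_zero] using this

end ConvexIsometry

section Sphere

variable {X Y : Type*} [NormedAddCommGroup X] [NormedSpace ℝ X]
  [NormedAddCommGroup Y] [NormedSpace ℝ Y]

/-- `Δ` restricts to a surjective isometry between the unit spheres of `X` and `Y`. -/
structure IsSphereIsometry (Δ : X → Y) : Prop where
  norm_map : ∀ x, ‖x‖ = 1 → ‖Δ x‖ = 1
  surj : ∀ y : Y, ‖y‖ = 1 → ∃ x, ‖x‖ = 1 ∧ Δ x = y
  norm_sub : ∀ x y, ‖x‖ = 1 → ‖y‖ = 1 → ‖Δ x - Δ y‖ = ‖x - y‖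

/-- The star of a point of the unit sphere: all points of the sphere which span, together
with it, a segment contained in the sphere. -/
def sphereStar (e : X) : Set X := {x | ‖x‖ = 1 ∧ ‖e + x‖ = 2}

omit [NormedSpace ℝ X] in
theorem neg_mem_sphereStar_neg {e x : X} : -x ∈ sphereStar (-e) ↔ x ∈ sphereStar e := by
  simp only [sphereStar, Set.mem_ofPred_eq, norm_neg]
  rw [← neg_add, norm_neg]

omit [NormedSpace ℝ X] in
theorem sphereStar_neg (e : X) : sphereStar (-e) = -sphereStar e := by
  ext x
  rw [Set.mem_neg, ← neg_mem_sphereStar_neg, neg_neg]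

theorem self_mem_sphereStar {e : X} (he : ‖e‖ = 1) : e ∈ sphereStar e :=
  ⟨he, by rw [← two_smul ℝ e, norm_smul, he]; norm_num⟩

theorem norm_add_of_mem_of_convex {S : Set X} (hS : Convex ℝ S) (h1 : ∀ x ∈ S, ‖x‖ = 1) {x y : X}
    (hx : x ∈ S) (hy : y ∈ S) : ‖x + y‖ = 2 := by
  have := h1 _ (hS hx hy (show (0 : ℝ) ≤ 1 / 2 by norm_num) (show (0 : ℝ) ≤ 1 / 2 by norm_num)
    (by norm_num))
  rw [← smul_add, norm_smul] at this
  norm_num at this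
  linarith

/-- If the midpoint of two unit vectors lies on the unit sphere, so does the segment. -/
theorem norm_segment_eq_one {x y : X} (hx : ‖x‖ = 1) (hy : ‖y‖ = 1) (hxy : ‖x + y‖ = 2) {a b : ℝ}
    (ha : 0 ≤ a) (hb : 0 ≤ b) (hab : a + b = 1) : ‖a • x + b • y‖ = 1 := by
  apply le_antisymm
  · refine (norm_add_le _ _).trans_eq ?_
    rw [norm_smul, norm_smul, hx, hy, Real.norm_eq_abs, Real.norm_eq_abs, abs_of_nonneg ha,
      abs_of_nonneg hb]
    linarith
  · have h1 : ‖b • x + a • y‖ ≤ 1 := by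
      refine (norm_add_le _ _).trans_eq ?_
      rw [norm_smul, norm_smul, hx, hy, Real.norm_eq_abs, Real.norm_eq_abs, abs_of_nonneg ha,
        abs_of_nonneg hb]
      linarith
    have h2 : x + y = (a • x + b • y) + (b • x + a • y) := by
      calc x + y = (a + b) • x + (a + b) • y := by rw [hab, one_smul, one_smul]
        _ = _ := by module
    have h3 := norm_add_le (a • x + b • y) (b • x + a • y)
    rw [← h2, hxy] at h3
    linarith

variable {Δ : X → Y} (hΔ : IsSphereIsometry Δ) {e : X}
include hΔ

omit [NormedSpace ℝ X] [NormedSpace ℝ Y] in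
theorem IsSphereIsometry.inj {x y : X} (hx : ‖x‖ = 1) (hy : ‖y‖ = 1) (h : Δ x = Δ y) : x = y := by
  have := hΔ.norm_sub x y hx hy
  rwa [h, sub_self, norm_zero, eq_comm, norm_eq_zero, sub_eq_zero] at this

theorem IsSphereIsometry.exists_map_neg_eq_neg_map (he : ‖e‖ = 1) (hc : Convex ℝ (sphereStar e))
    {x : X} (hx : x ∈ sphereStar e) : ∃ x' ∈ sphereStar e, Δ (-x') = -Δ x := by
  obtain ⟨y, hy, hye⟩ := hΔ.surj (-Δ e) (by rw [norm_neg, hΔ.norm_map e he])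
  have h2 : ‖Δ e + Δ e‖ = 2 := by
    rw [← two_smul ℝ, norm_smul, hΔ.norm_map e he]; norm_num
  have hy' : -y ∈ sphereStar e := by
    refine ⟨by rwa [norm_neg], ?_⟩
    rw [← sub_eq_add_neg, ← hΔ.norm_sub e y he hy, hye, sub_neg_eq_add, h2]
  have h3 := norm_add_of_mem_of_convex hc (fun _ h => h.1) hx hy'
  rw [← sub_eq_add_neg, ← hΔ.norm_sub x y hx.1 hy, hye, sub_neg_eq_add] at h3
  obtain ⟨z, hz, hzx⟩ := hΔ.surj (-Δ x) (by rw [norm_neg, hΔ.norm_map x hx.1])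
  refine ⟨-z, ⟨by rwa [norm_neg], ?_⟩, by rw [neg_neg, hzx]⟩
  rw [← sub_eq_add_neg, ← hΔ.norm_sub e z he hz, hzx, sub_neg_eq_add, add_comm, h3]

theorem IsSphereIsometry.exists_map_eq_neg_map_neg (he : ‖e‖ = 1) (hc : Convex ℝ (sphereStar e))
    {x : X} (hx : x ∈ sphereStar e) : ∃ x' ∈ sphereStar e, Δ x' = -Δ (-x) := by
  obtain ⟨y, hy, h⟩ := hΔ.exists_map_neg_eq_neg_map (e := -e) (by rwa [norm_neg])
    (by rw [sphereStar_neg]; exact hc.neg) (neg_mem_sphereStar_neg.mpr hx)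
  exact ⟨-y, by rwa [sphereStar_neg] at hy, h⟩

/-- The image of a convex star is convex. -/
theorem IsSphereIsometry.convex_image_sphereStar (he : ‖e‖ = 1) (hc : Convex ℝ (sphereStar e)) :
    Convex ℝ (Δ '' sphereStar e) := by
  have hne : ‖-e‖ = 1 := by rwa [norm_neg]
  have himg : Δ '' sphereStar e = {z | ‖z‖ = 1 ∧ ‖z - Δ (-e)‖ = 2} := by
    ext z
    constructor
    · rintro ⟨x, hx, rfl⟩
      refine ⟨hΔ.norm_map x hx.1, ?_⟩
      rw [hΔ.norm_sub _ _ hx.1 hne, sub_neg_eq_add, add_comm, hx.2]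
    · rintro ⟨hz, hz2⟩
      obtain ⟨x, hx, rfl⟩ := hΔ.surj z hz
      rw [hΔ.norm_sub _ _ hx hne, sub_neg_eq_add, add_comm] at hz2
      exact ⟨x, ⟨hx, hz2⟩, rfl⟩
  have hclosed : IsClosed (Δ '' sphereStar e) := by
    rw [himg]
    exact (isClosed_eq continuous_norm continuous_const).inter
      (isClosed_eq (by fun_prop) continuous_const)
  rintro z hz _ ⟨x₂, hx₂, rfl⟩ a b ha hb hab
  obtain ⟨x₁, hx₁, hzx⟩ : ∃ x₁ ∈ sphereStar e, Δ (-x₁) = -z := by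
    obtain ⟨x, hx, rfl⟩ := hz
    exact hΔ.exists_map_neg_eq_neg_map he hc hx
  set p : ℝ → X := fun t => t • e + (1 - t) • x₁
  have hp : ∀ t, 0 ≤ t → t ≤ 1 → p t ∈ sphereStar e := fun t h0 h1 =>
    hc (self_mem_sphereStar he) hx₁ h0 (by linarith) (by ring)
  have hmem : ∀ t, 0 < t → t < 1 → a • -Δ (-p t) + b • Δ x₂ ∈ Δ '' sphereStar e := by
    intro t h0 h1
    have hpt := hp t h0.le h1.le
    have hnp : ‖-p t‖ = 1 := by rw [norm_neg, hpt.1]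
    have hw1 : ‖-Δ (-p t)‖ = 1 := by rw [norm_neg, hΔ.norm_map _ hnp]
    have hw2 := hΔ.norm_map _ hx₂.1
    have h2 : ‖-Δ (-p t) + Δ x₂‖ = 2 := by
      rw [add_comm, ← sub_eq_add_neg, hΔ.norm_sub _ _ hx₂.1 hnp, sub_neg_eq_add]
      exact norm_add_of_mem_of_convex hc (fun _ h => h.1) hx₂ hpt
    have hm := norm_segment_eq_one hw1 hw2 h2 ha hb hab
    obtain ⟨x, hx, hxm⟩ := hΔ.surj _ hm
    refine ⟨x, ⟨hx, ?_⟩, hxm⟩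
    have h3 : ‖x + p t‖ = 2 := by
      rw [← sub_neg_eq_add, ← hΔ.norm_sub _ _ hx hnp, hxm]
      have := norm_segment_eq_one hw1 hw2 h2 (a := (1 + a) / 2) (b := b / 2) (by linarith)
        (by linarith) (by linarith)
      rw [show a • -Δ (-p t) + b • Δ x₂ - Δ (-p t)
        = (2 : ℝ) • (((1 + a) / 2) • -Δ (-p t) + (b / 2) • Δ x₂) by module, norm_smul, this]
      norm_num
    have h4 : x + p t = t • (e + x) + (1 - t) • (x + x₁) := by simp only [p]; module
    have h5 := norm_add_le (t • (e + x)) ((1 - t) • (x + x₁))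
    rw [← h4, h3, norm_smul, norm_smul, Real.norm_eq_abs, Real.norm_eq_abs, abs_of_pos h0,
      abs_of_pos (by linarith : 0 < 1 - t)] at h5
    have h6 : ‖x + x₁‖ ≤ 2 := (norm_add_le _ _).trans (by rw [hx, hx₁.1]; norm_num)
    have h7 : ‖e + x‖ ≤ 2 := (norm_add_le _ _).trans (by rw [hx, he]; norm_num)
    nlinarith
  have hp0 : p 0 = x₁ := by simp [p]
  have hpc : Filter.Tendsto (fun t => ‖p t - x₁‖) (nhdsWithin 0 (Ioi 0)) (nhds 0) := by
    have : ContinuousAt (fun t : ℝ => ‖p t - x₁‖) 0 := by fun_prop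
    have h := this.tendsto.mono_left (nhdsWithin_le_nhds (s := Ioi 0))
    simpa [hp0] using h
  have hev : ∀ᶠ t : ℝ in nhdsWithin 0 (Ioi 0), t ∈ Ioo (0 : ℝ) 1 :=
    Ioo_mem_nhdsGT (by norm_num)
  have hlim : Filter.Tendsto (fun t => -Δ (-p t)) (nhdsWithin 0 (Ioi 0)) (nhds z) := by
    rw [tendsto_iff_norm_sub_tendsto_zero]
    refine hpc.congr' ?_
    filter_upwards [hev] with t ht
    have hnp : ‖-p t‖ = 1 := by rw [norm_neg, (hp t ht.1.le ht.2.le).1]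
    rw [← neg_neg z, ← hzx, neg_sub_neg, hΔ.norm_sub _ _ (by rw [norm_neg, hx₁.1]) hnp,
      neg_sub_neg]
  refine hclosed.mem_of_tendsto ((hlim.const_smul a).add_const (b • Δ x₂)) ?_
  filter_upwards [hev] with t ht
  exact hmem t ht.1 ht.2

omit [NormedSpace ℝ X] [NormedSpace ℝ Y] in
/-- A subset of the sphere whose image is compatible with negation has its metric centre mapped
compatibly with negation. -/
theorem IsSphereIsometry.map_neg_of_center {A : Set X} (hA : ∀ x ∈ A, ‖x‖ = 1)
    (h1 : ∀ x ∈ A, ∃ x' ∈ A, Δ (-x') = -Δ x) (h2 : ∀ x ∈ A, ∃ x' ∈ A, Δ x' = -Δ (-x))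
    {v : X} (hv : v ∈ A) (hvA : ∀ w ∈ A, ‖w - v‖ ≤ 1)
    (huniq : ∀ x ∈ A, (∀ w ∈ A, ‖x - w‖ ≤ 1) → x = v) : Δ (-v) = -Δ v := by
  obtain ⟨x, hx, hxv⟩ := h1 v hv
  rw [← huniq x hx ?_, hxv, huniq x hx ?_]
  all_goals
    intro w hw
    obtain ⟨w', hw', hww⟩ := h2 w hw
    have := hvA w' hw'
    rwa [← hΔ.norm_sub _ _ (hA _ hw') (hA _ hv), hww, ← neg_neg (Δ v), ← hxv, neg_sub_neg,
      hΔ.norm_sub _ _ (by rw [norm_neg, hA _ hx]) (by rw [norm_neg, hA _ hw]), neg_sub_neg,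
      norm_sub_rev] at this

end Sphere

section Hilbert

open InnerProductSpace

variable {H : Type*} [NormedAddCommGroup H] [InnerProductSpace ℂ H]

theorem norm_sq_eq_norm_inner_sq_add {η : H} (hη : ‖η‖ = 1) (h : H) :
    ‖h‖ ^ 2 = ‖⟪η, h⟫_ℂ‖ ^ 2 + ‖h - ⟪η, h⟫_ℂ • η‖ ^ 2 := by
  have h1 : ⟪⟪η, h⟫_ℂ • η, h - ⟪η, h⟫_ℂ • η⟫_ℂ = 0 := by
    rw [inner_smul_left, inner_sub_right, inner_smul_right, inner_self_eq_norm_sq_to_K, hη]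
    simp
  have h2 := norm_add_sq_eq_norm_sq_add_norm_sq_of_inner_eq_zero _ _ h1
  rw [add_sub_cancel, norm_smul, hη, mul_one] at h2
  linarith

theorem norm_sub_inner_smul_le {η : H} (hη : ‖η‖ = 1) (h : H) :
    ‖h - ⟪η, h⟫_ℂ • η‖ ≤ ‖h‖ := by
  have := norm_sq_eq_norm_inner_sq_add hη h
  exact abs_le_of_sq_le_sq' (by nlinarith [sq_nonneg ‖⟪η, h⟫_ℂ‖]) (norm_nonneg _) |>.2

/-- The Peirce-zero subspace of the rank-one partial isometry `rankOne ℂ ξ η`. -/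
def peirceZero (ξ η : H) : Submodule ℝ (H →L[ℂ] H) where
  carrier := {z | z η = 0 ∧ ∀ h, ⟪ξ, z h⟫_ℂ = 0}
  add_mem' := fun ha hb ↦ ⟨by simp [ha.1, hb.1], fun h ↦ by simp [ha.2, hb.2]⟩
  zero_mem' := by simp
  smul_mem' := fun r x hx ↦ ⟨by simp [hx.1], fun h ↦ by
    have : (r • x) h = (r : ℂ) • x h := by simp
    rw [this, inner_smul_right, hx.2, mul_zero]⟩

theorem mem_peirceZero {ξ η : H} {z : H →L[ℂ] H} :
    z ∈ peirceZero ξ η ↔ z η = 0 ∧ ∀ h, ⟪ξ, z h⟫_ℂ = 0 := Iff.rfl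

theorem peirceZero_neg (ξ η : H) : peirceZero (-ξ) η = peirceZero ξ η := by
  ext z
  simp [mem_peirceZero]

theorem rankOne_mem_peirceZero {ξ η k h : H} (hk : ⟪ξ, k⟫_ℂ = 0) (hh : ⟪η, h⟫_ℂ = 0) :
    rankOne ℂ k h ∈ peirceZero ξ η := by
  refine ⟨?_, fun x ↦ ?_⟩
  · rw [rankOne_apply, inner_eq_zero_symm.mp hh, zero_smul]
  · rw [rankOne_apply, inner_smul_right, hk, mul_zero]

theorem norm_rankOne_add_le {ξ η : H} (hξ : ‖ξ‖ = 1) (hη : ‖η‖ = 1) {z : H →L[ℂ] H}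
    (hz : z ∈ peirceZero ξ η) (hz1 : ‖z‖ ≤ 1) : ‖rankOne ℂ ξ η + z‖ ≤ 1 := by
  refine ContinuousLinearMap.opNorm_le_bound _ zero_le_one fun h ↦ ?_
  have h1 : z h = z (h - ⟪η, h⟫_ℂ • η) := by rw [map_sub, map_smul, hz.1, smul_zero, sub_zero]
  have h2 : ⟪⟪η, h⟫_ℂ • ξ, z h⟫_ℂ = 0 := by rw [inner_smul_left, hz.2, mul_zero]
  have h3 := norm_add_sq_eq_norm_sq_add_norm_sq_of_inner_eq_zero _ _ h2
  have h4 := norm_sq_eq_norm_inner_sq_add hη h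
  have h5 : ‖z h‖ ≤ ‖h - ⟪η, h⟫_ℂ • η‖ := by
    rw [h1]
    exact (z.le_opNorm _).trans (mul_le_of_le_one_left (norm_nonneg _) hz1)
  rw [norm_smul, hξ, mul_one] at h3
  rw [one_mul, add_apply, rankOne_apply]
  refine abs_le_of_sq_le_sq' ?_ (norm_nonneg _) |>.2
  nlinarith [norm_nonneg (z h)]

theorem norm_rankOne_add {ξ η : H} (hξ : ‖ξ‖ = 1) (hη : ‖η‖ = 1) {z : H →L[ℂ] H}
    (hz : z ∈ peirceZero ξ η) (hz1 : ‖z‖ ≤ 1) : ‖rankOne ℂ ξ η + z‖ = 1 := by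
  refine le_antisymm (norm_rankOne_add_le hξ hη hz hz1) ?_
  have := (rankOne ℂ ξ η + z).le_opNorm η
  rw [add_apply, rankOne_apply, hz.1, add_zero,
    inner_self_eq_norm_sq_to_K, hη] at this
  simpa [hξ] using this

theorem norm_rankOne_of_unit {ξ η : H} (hξ : ‖ξ‖ = 1) (hη : ‖η‖ = 1) :
    ‖rankOne ℂ ξ η‖ = 1 := by
  rw [norm_rankOne, hξ, hη, one_mul]

theorem rankOne_apply_right {ξ η : H} (hη : ‖η‖ = 1) : rankOne ℂ ξ η η = ξ := by
  rw [rankOne_apply, inner_self_eq_norm_sq_to_K, hη]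
  simp

theorem apply_eq_of_mem_sphereStar_rankOne {ξ η : H} (hξ : ‖ξ‖ = 1) (hη : ‖η‖ = 1)
    {x : H →L[ℂ] H} (hx : x ∈ sphereStar (rankOne ℂ ξ η)) : x η = ξ := by
  obtain ⟨hx1, hx2⟩ := hx
  rw [← sub_eq_zero, ← norm_le_zero_iff]
  have hd : ‖x η - ξ‖ ≤ 2 := by
    refine (norm_sub_le _ _).trans ?_
    have := x.le_opNorm η
    rw [hx1, hη] at this
    linarith
  suffices key : ∀ t : ℝ, 0 < t → t < 1 → ‖x η - ξ‖ ≤ 6 * t by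
    refine le_of_forall_pos_le_add fun ε hε ↦ ?_
    refine (key (min (ε / 6) (1 / 2)) (by positivity)
      ((min_le_right _ _).trans_lt (by norm_num))).trans ?_
    linarith [min_le_left (ε / 6) (1 / 2)]
  intro t ht0 ht1
  obtain ⟨h, hh1, hh2⟩ := (rankOne ℂ ξ η + x).exists_lt_apply_of_lt_opNorm
    (show 2 - t ^ 2 < ‖rankOne ℂ ξ η + x‖ by rw [hx2]; nlinarith)
  have hxh : ‖x h‖ ≤ 1 := by
    refine (x.le_opNorm h).trans ?_
    rw [hx1, one_mul]
    exact hh1.le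
  have h4 := norm_sq_eq_norm_inner_sq_add hη h
  set a := ⟪η, h⟫_ℂ with ha
  set h' := h - a • η with hh'
  rw [add_apply, rankOne_apply, ← ha] at hh2
  have hpar := parallelogram_law_with_norm ℂ (a • ξ) (x h)
  have hna : ‖a • ξ‖ = ‖a‖ := by rw [norm_smul, hξ, mul_one]
  have ha1 : 1 - t ^ 2 ≤ ‖a‖ := by
    have := norm_add_le (a • ξ) (x h)
    rw [hna] at this
    linarith
  have ha2 : ‖a‖ ≤ 1 := by
    refine (norm_inner_le_norm _ _).trans ?_
    rw [hη, one_mul]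
    exact hh1.le
  rw [hna] at hpar
  have e0 : (2 - t ^ 2) ^ 2 ≤ ‖a • ξ + x h‖ ^ 2 := pow_le_pow_left₀ (by nlinarith) hh2.le 2
  have e1 : ‖a • ξ - x h‖ ≤ 2 * t := by
    refine abs_le_of_sq_le_sq' ?_ (by positivity) |>.2
    nlinarith [norm_nonneg (x h), norm_nonneg a, sq_nonneg (t ^ 2)]
  have e2 : ‖h'‖ ≤ 2 * t := by
    refine abs_le_of_sq_le_sq' ?_ (by positivity) |>.2
    nlinarith [norm_nonneg h, norm_nonneg a]
  have e3 : ‖x h'‖ ≤ 2 * t := by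
    refine (x.le_opNorm h').trans ?_
    rwa [hx1, one_mul]
  have e4 : a • (x η - ξ) = -(a • ξ - x h) - x h' := by
    rw [hh', map_sub, map_smul, smul_sub]
    abel
  have e5 : ‖a‖ * ‖x η - ξ‖ ≤ 4 * t := by
    rw [← norm_smul, e4]
    refine (norm_sub_le _ _).trans ?_
    rw [norm_neg]
    linarith
  nlinarith [norm_nonneg (x η - ξ)]

variable [CompleteSpace H]

theorem inner_apply_eq_of_apply_eq {ξ η : H} (hξ : ‖ξ‖ = 1) (hη : ‖η‖ = 1) {x : H →L[ℂ] H}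
    (hx : ‖x‖ ≤ 1) (h : x η = ξ) (k : H) : ⟪ξ, x k⟫_ℂ = ⟪η, k⟫_ℂ := by
  rw [← ContinuousLinearMap.adjoint_inner_left]
  congr 1
  set w := ContinuousLinearMap.adjoint x ξ with hw
  have hw1 : ‖w‖ ≤ 1 := by
    refine ((ContinuousLinearMap.adjoint x).le_opNorm ξ).trans ?_
    rw [hξ, mul_one, LinearIsometryEquiv.norm_map]
    exact hx
  have h1 : ⟪w, η⟫_ℂ = 1 := by
    rw [hw, ContinuousLinearMap.adjoint_inner_left, h, inner_self_eq_norm_sq_to_K, hξ]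
    simp
  have h2 := @norm_sub_sq ℂ H _ _ _ w η
  rw [h1, hη, RCLike.one_re] at h2
  have h3 : ‖w - η‖ ^ 2 ≤ 0 := by nlinarith [norm_nonneg w]
  rw [← sub_eq_zero, ← norm_eq_zero]
  exact pow_eq_zero_iff two_ne_zero |>.mp (le_antisymm h3 (sq_nonneg _))

theorem sub_mem_peirceZero_of_apply_eq {ξ η : H} (hξ : ‖ξ‖ = 1) (hη : ‖η‖ = 1) {x : H →L[ℂ] H}
    (hx : ‖x‖ ≤ 1) (h : x η = ξ) :
    x - rankOne ℂ ξ η ∈ peirceZero ξ η ∧ ‖x - rankOne ℂ ξ η‖ ≤ 1 := by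
  refine ⟨⟨?_, fun k ↦ ?_⟩, ?_⟩
  · rw [sub_apply, rankOne_apply_right hη, h, sub_self]
  · rw [sub_apply, inner_sub_right, inner_apply_eq_of_apply_eq hξ hη hx h,
      rankOne_apply, inner_smul_right, inner_self_eq_norm_sq_to_K, hξ]
    simp
  · refine ContinuousLinearMap.opNorm_le_bound _ zero_le_one fun k ↦ ?_
    have h1 : (x - rankOne ℂ ξ η) k = x (k - ⟪η, k⟫_ℂ • η) := by
      rw [sub_apply, rankOne_apply, map_sub, map_smul, h]
    rw [h1, one_mul]
    refine (x.le_opNorm _).trans ?_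
    exact (mul_le_of_le_one_left (norm_nonneg _) hx).trans (norm_sub_inner_smul_le hη k)

theorem mem_sphereStar_rankOne {ξ η : H} (hξ : ‖ξ‖ = 1) (hη : ‖η‖ = 1) {x : H →L[ℂ] H} :
    x ∈ sphereStar (rankOne ℂ ξ η) ↔
      x - rankOne ℂ ξ η ∈ peirceZero ξ η ∧ ‖x - rankOne ℂ ξ η‖ ≤ 1 := by
  refine ⟨fun hx ↦ sub_mem_peirceZero_of_apply_eq hξ hη hx.1.le
    (apply_eq_of_mem_sphereStar_rankOne hξ hη hx), fun ⟨hx, hx1⟩ ↦ ?_⟩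
  have hn : ‖x‖ = 1 := by
    have := norm_rankOne_add hξ hη hx hx1
    rwa [add_sub_cancel] at this
  refine ⟨hn, le_antisymm ?_ ?_⟩
  · refine (norm_add_le _ _).trans ?_
    rw [hn, norm_rankOne_of_unit hξ hη]
    norm_num
  · have h1 := (rankOne ℂ ξ η + x).le_opNorm η
    have h2 : x η = ξ := by
      have := hx.1
      rwa [sub_apply, rankOne_apply_right hη, sub_eq_zero] at this
    rw [add_apply, rankOne_apply_right hη, h2, hη, mul_one, ← two_smul ℝ ξ,
      norm_smul, hξ] at h1
    simpa using h1

theorem rankOne_add_mem_sphereStar {ξ η : H} (hξ : ‖ξ‖ = 1) (hη : ‖η‖ = 1) {z : H →L[ℂ] H}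
    (hz : z ∈ peirceZero ξ η) (hz1 : ‖z‖ ≤ 1) :
    rankOne ℂ ξ η + z ∈ sphereStar (rankOne ℂ ξ η) := by
  rw [mem_sphereStar_rankOne hξ hη, add_sub_cancel_left]
  exact ⟨hz, hz1⟩

theorem convex_sphereStar_rankOne {ξ η : H} (hξ : ‖ξ‖ = 1) (hη : ‖η‖ = 1) :
    Convex ℝ (sphereStar (rankOne ℂ ξ η)) := by
  have : sphereStar (rankOne ℂ ξ η) = (fun x ↦ rankOne ℂ ξ η + x) ''
      ((peirceZero ξ η : Set (H →L[ℂ] H)) ∩ closedBall 0 1) := by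
    ext x
    rw [mem_sphereStar_rankOne hξ hη]
    constructor
    · rintro ⟨h1, h2⟩
      exact ⟨_, ⟨h1, mem_closedBall_zero_iff.mpr h2⟩, add_sub_cancel _ _⟩
    · rintro ⟨z, ⟨h1, h2⟩, rfl⟩
      simpa using ⟨h1, mem_closedBall_zero_iff.mp h2⟩
  rw [this]
  exact ((peirceZero ξ η).convex.inter (convex_closedBall _ _)).translate _

end Hilbert

section Faces

open InnerProductSpace

variable {H : Type*} [NormedAddCommGroup H] [InnerProductSpace ℂ H]

theorem eq_zero_of_forall_norm_sub_le_one {X : Type*} [NormedAddCommGroup X] [NormedSpace ℝ X]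
    {N : Submodule ℝ X} {x : X} (hx : x ∈ N) (h : ∀ z ∈ N, ‖z‖ ≤ 1 → ‖x - z‖ ≤ 1) : x = 0 := by
  by_contra hx0
  have hn : 0 < ‖x‖ := norm_pos_iff.mpr hx0
  have h1 := h (-(‖x‖⁻¹ • x)) (N.neg_mem (N.smul_mem _ hx)) (by
    rw [norm_neg, norm_smul, norm_inv, norm_norm, inv_mul_cancel₀ hn.ne'])
  have h2 : x - -(‖x‖⁻¹ • x) = (1 + ‖x‖⁻¹) • x := by rw [add_smul, one_smul, sub_neg_eq_add]
  rw [h2, norm_smul, Real.norm_of_nonneg (by positivity), add_mul, inv_mul_cancel₀ hn.ne'] at h1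
  linarith

/-- The unitary operators are extreme points of the unit ball. -/
theorem mem_extremePoints_of_mem_unitary {K : Type*} [NormedAddCommGroup K] [InnerProductSpace ℂ K]
    [CompleteSpace K] {u : K →L[ℂ] K} (hu : u ∈ unitary (K →L[ℂ] K)) :
    u ∈ extremePoints ℝ (closedBall (0 : K →L[ℂ] K) 1) := by
  let _ : InnerProductSpace ℝ K := InnerProductSpace.rclikeToReal ℂ K
  have hnorm := fun x ↦ ContinuousLinearMap.norm_map_of_mem_unitary hu x
  have hball : ∀ {x : K →L[ℂ] K}, x ∈ closedBall (0 : K →L[ℂ] K) 1 → ∀ h,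
      x h ∈ closedBall (0 : K) ‖h‖ := fun {x} hx h ↦ by
    rw [mem_closedBall_zero_iff] at hx ⊢
    exact (x.le_opNorm h).trans (mul_le_of_le_one_left (norm_nonneg _) hx)
  rw [mem_extremePoints]
  refine ⟨mem_closedBall_zero_iff.mpr (ContinuousLinearMap.opNorm_le_bound _ zero_le_one fun x ↦
    by rw [hnorm, one_mul]), fun a ha b hb hab ↦ ?_⟩
  have key : ∀ h, a h = u h ∧ b h = u h := fun h ↦ by
    rcases eq_or_ne h 0 with rfl | h0
    · simp
    have h1 := StrictConvexSpace.sphere_subset_extremePoints_closedBall (0 : K)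
      (norm_ne_zero_iff.mpr h0) (mem_sphere_zero_iff_norm.mpr (hnorm h))
    refine (mem_extremePoints.mp h1).2 _ (hball ha h) _ (hball hb h) ?_
    obtain ⟨s, t, hs, ht, hst, rfl⟩ := hab
    exact ⟨s, t, hs, ht, hst, by simp⟩
  exact ⟨ContinuousLinearMap.ext fun h ↦ (key h).1, ContinuousLinearMap.ext fun h ↦ (key h).2⟩

theorem exists_sum_four_real_smul_unitary {A : Type*} [CStarAlgebra A] (x : A) :
    ∃ (t : Fin 4 → ℝ) (v : Fin 4 → A),
      (∀ i, v i ∈ unitary A) ∧ ∑ i, |t i| ≤ 2 * ‖x‖ ∧ x = ∑ i, t i • v i := by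
  obtain ⟨u, c, hx, hc⟩ := CStarAlgebra.exists_sum_four_unitary x
  have h1 : ∀ z : ℂ, ∃ w : ℂ, ‖w‖ = 1 ∧ z = (‖z‖ : ℂ) * w := fun z ↦
    ⟨Complex.exp (z.arg * Complex.I), Complex.norm_exp_ofReal_mul_I _,
      (Complex.norm_mul_exp_arg_mul_I z).symm⟩
  choose w hw1 hw2 using h1
  refine ⟨fun i ↦ ‖c i‖, fun i ↦ w (c i) • (u i : A), fun i ↦ ?_, ?_, ?_⟩
  · rw [Unitary.mem_iff]
    have h2 : starRingEnd ℂ (w (c i)) * w (c i) = 1 := by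
      rw [mul_comm, Complex.mul_conj, Complex.normSq_eq_norm_sq, hw1]
      simp
    have h3 : w (c i) * starRingEnd ℂ (w (c i)) = 1 := by rw [mul_comm, h2]
    constructor <;>
    simp [star_smul, smul_smul, h2, h3]
  · simp only [abs_norm]
    calc ∑ i, ‖c i‖ ≤ ∑ _i : Fin 4, ‖x‖ / 2 := Finset.sum_le_sum fun i _ ↦ hc i
      _ = 2 * ‖x‖ := by simp; ring
  · conv_lhs => rw [hx]
    refine Finset.sum_congr rfl fun i _ ↦ ?_
    conv_lhs => rw [hw2 (c i), mul_smul]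
    exact Complex.coe_smul _ _

theorem exists_linearIsometryEquiv_apply_eq_smul [CompleteSpace H] {ξ η : H} (hξ : ‖ξ‖ = 1)
    (hη : ‖η‖ = 1) : ∃ (V : H ≃ₗᵢ[ℂ] H) (c : ℂ), ‖c‖ = 1 ∧ V η = c • ξ := by
  obtain ⟨c, hc, hr⟩ : ∃ c : ℂ, ‖c‖ = 1 ∧ ⟪η, c • ξ⟫_ℂ = (‖⟪η, ξ⟫_ℂ‖ : ℂ) := by
    set z := ⟪η, ξ⟫_ℂ with hz
    refine ⟨Complex.exp ((-z.arg : ℝ) * Complex.I), Complex.norm_exp_ofReal_mul_I _, ?_⟩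
    rw [inner_smul_right, ← hz]
    conv_lhs => rw [← Complex.norm_mul_exp_arg_mul_I z]
    rw [mul_left_comm, ← Complex.exp_add]
    simp
  set ξ' := c • ξ with hξ'
  have hn : ‖ξ'‖ = 1 := by rw [hξ', norm_smul, hc, hξ, one_mul]
  refine ⟨(ℂ ∙ (η - ξ'))ᗮ.reflection, c, hc, ?_⟩
  have hr' : ⟪ξ', η⟫_ℂ = ⟪η, ξ'⟫_ℂ := by
    rw [← inner_conj_symm, hr, Complex.conj_ofReal]
  have h1 : η + ξ' ∈ (ℂ ∙ (η - ξ'))ᗮ := by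
    rw [Submodule.mem_orthogonal_singleton_iff_inner_right, inner_sub_left, inner_add_right,
      inner_add_right, hr', inner_self_eq_norm_sq_to_K, inner_self_eq_norm_sq_to_K, hn, hη]
    ring
  have h2 := Submodule.reflection_mem_subspace_eq_self h1
  have h3 := Submodule.reflection_orthogonalComplement_singleton_eq_neg (𝕜 := ℂ) (η - ξ')
  have h4 : η = (1 / 2 : ℂ) • ((η + ξ') + (η - ξ')) := by module
  refine (congrArg _ h4).trans ?_
  rw [map_smul, map_add, h2, h3]
  module

/-- The Peirce-zero space of a rank-one partial isometry is isometric to the algebra of bounded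
operators on any Hilbert space which is identified with the orthogonal complement of `η`. -/
theorem exists_peirceZero_isometry [CompleteSpace H] {K : Type*} [NormedAddCommGroup K]
    [InnerProductSpace ℂ K] {ι : K →L[ℂ] H} {P : H →L[ℂ] K} {ξ η : H} (hξ : ‖ξ‖ = 1)
    (hη : ‖η‖ = 1) (hι : ∀ x, ‖ι x‖ = ‖x‖) (hPι : ∀ x, P (ι x) = x)
    (hιP : ∀ x, ι (P x) = x - ⟪η, x⟫_ℂ • η) :
    ∃ (j : (K →L[ℂ] K) →ₗ[ℝ] (H →L[ℂ] H)) (k : (H →L[ℂ] H) →ₗ[ℝ] (K →L[ℂ] K)),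
      (∀ z, j z ∈ peirceZero ξ η) ∧ (∀ z, ‖j z‖ = ‖z‖) ∧
        ∀ y ∈ peirceZero ξ η, j (k y) = y := by
  obtain ⟨V, c, hc, hV⟩ := exists_linearIsometryEquiv_apply_eq_smul hξ hη
  have hc0 : c ≠ 0 := norm_ne_zero_iff.mp (by rw [hc]; exact one_ne_zero)
  have hηη : ⟪η, η⟫_ℂ = 1 := by rw [inner_self_eq_norm_sq_to_K, hη]; simp
  have hVK : ∀ x : H, ⟪ξ, V x⟫_ℂ = 0 ↔ ⟪η, x⟫_ℂ = 0 := fun x ↦ by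
    rw [← V.inner_map_map η, hV, inner_smul_left, mul_eq_zero]
    simp [hc0]
  have hηι : ∀ x, ⟪η, ι x⟫_ℂ = 0 := fun x ↦ by
    rw [← hPι x, hιP, inner_sub_right, inner_smul_right, hηη, mul_one, sub_self]
  let j : (K →L[ℂ] K) →ₗ[ℝ] (H →L[ℂ] H) :=
    { toFun := fun z ↦ (V : H →L[ℂ] H) ∘L ι ∘L z ∘L P
      map_add' := fun a b ↦ by ext h; simp
      map_smul' := fun r a ↦ by ext h; simp }
  let k : (H →L[ℂ] H) →ₗ[ℝ] (K →L[ℂ] K) :=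
    { toFun := fun y ↦ P ∘L (V.symm : H →L[ℂ] H) ∘L y ∘L ι
      map_add' := fun a b ↦ by ext h; simp
      map_smul' := fun r a ↦ by ext h; simp }
  have hj : ∀ z h, j z h = V (ι (z (P h))) := fun z h ↦ rfl
  have hk : ∀ y h, k y h = P (V.symm (y (ι h))) := fun y h ↦ rfl
  refine ⟨j, k, fun z ↦ ⟨?_, fun h ↦ ?_⟩, fun z ↦ le_antisymm ?_ ?_, fun y hy ↦ ?_⟩
  · have hP0 : P η = 0 := by
      rw [← norm_eq_zero, ← hι, hιP, hηη, one_smul, sub_self, norm_zero]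
    rw [hj, hP0]
    simp
  · rw [hj, hVK, hηι]
  · refine ContinuousLinearMap.opNorm_le_bound _ (norm_nonneg _) fun h ↦ ?_
    rw [hj, V.norm_map, hι]
    refine (z.le_opNorm _).trans ?_
    gcongr
    rw [← hι, hιP]
    exact norm_sub_inner_smul_le hη h
  · refine ContinuousLinearMap.opNorm_le_bound _ (norm_nonneg _) fun h ↦ ?_
    have := (j z).le_opNorm (ι h)
    rwa [hj, V.norm_map, hι, hι, hPι] at this
  · ext h
    have h1 : y (ι (P h)) = y h := by rw [hιP, map_sub, map_smul, hy.1, smul_zero, sub_zero]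
    have h2 : ⟪η, V.symm (y h)⟫_ℂ = 0 := by
      rw [← hVK, V.apply_symm_apply]
      exact hy.2 h
    rw [hj, hk, h1, hιP, h2, zero_smul, sub_zero, V.apply_symm_apply]

variable [CompleteSpace H] {Y : Type*} [NormedAddCommGroup Y] [NormedSpace ℝ Y]
  {Δ : (H →L[ℂ] H) → Y}

theorem IsSphereIsometry.exists_linear_peirceZero_of_isometry (hΔ : IsSphereIsometry Δ)
    {K : Type*} [NormedAddCommGroup K] [InnerProductSpace ℂ K] [CompleteSpace K]
    {j : (K →L[ℂ] K) →ₗ[ℝ] (H →L[ℂ] H)} {k : (H →L[ℂ] H) →ₗ[ℝ] (K →L[ℂ] K)} {ξ η : H}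
    (hξ : ‖ξ‖ = 1) (hη : ‖η‖ = 1) (hj1 : ∀ z, j z ∈ peirceZero ξ η) (hj2 : ∀ z, ‖j z‖ = ‖z‖)
    (hjk : ∀ y ∈ peirceZero ξ η, j (k y) = y) :
    ∃ G : (H →L[ℂ] H) →ₗ[ℝ] Y,
      (∀ z ∈ peirceZero ξ η, ‖z‖ ≤ 1 → Δ (rankOne ℂ ξ η + z) = Δ (rankOne ℂ ξ η) + G z) ∧
        ∀ z ∈ peirceZero ξ η, ‖G z‖ = ‖z‖ := by
  have hkn : ∀ y ∈ peirceZero ξ η, ‖k y‖ = ‖y‖ := fun y hy ↦ by rw [← hj2, hjk y hy]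
  have himg : (fun z ↦ Δ (rankOne ℂ ξ η + j z)) '' closedBall 0 1 =
      Δ '' sphereStar (rankOne ℂ ξ η) := by
    ext y
    constructor
    · rintro ⟨z, hz, rfl⟩
      rw [mem_closedBall_zero_iff] at hz
      exact ⟨_, rankOne_add_mem_sphereStar hξ hη (hj1 z) (by rwa [hj2]), rfl⟩
    · rintro ⟨x, hx, rfl⟩
      obtain ⟨h1, h2⟩ := (mem_sphereStar_rankOne hξ hη).mp hx
      refine ⟨k (x - rankOne ℂ ξ η), by rwa [mem_closedBall_zero_iff, hkn _ h1], ?_⟩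
      simp only [hjk _ h1, add_sub_cancel]
  obtain ⟨G, hG⟩ := exists_linear_of_isometry_of_convex_image
    (f := fun z ↦ Δ (rankOne ℂ ξ η + j z))
    (fun u hu ↦ mem_extremePoints_of_mem_unitary hu) exists_sum_four_real_smul_unitary
    (fun x hx y hy ↦ by
      rw [mem_closedBall_zero_iff] at hx hy
      rw [hΔ.norm_sub _ _ (norm_rankOne_add hξ hη (hj1 x) (by rwa [hj2]))
        (norm_rankOne_add hξ hη (hj1 y) (by rwa [hj2])), add_sub_add_left_eq_sub, ← map_sub, hj2])
    (himg ▸ hΔ.convex_image_sphereStar (norm_rankOne_of_unit hξ hη)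
      (convex_sphereStar_rankOne hξ hη))
  have hG1 : ∀ z ∈ peirceZero ξ η, ‖z‖ ≤ 1 →
      Δ (rankOne ℂ ξ η + z) = Δ (rankOne ℂ ξ η) + (G ∘ₗ k) z := fun z hz hz1 ↦ by
    have := hG (k z) (by rwa [hkn z hz])
    simp only [hjk z hz, map_zero, add_zero] at this
    exact this
  refine ⟨G ∘ₗ k, hG1, fun z hz ↦ ?_⟩
  have hsmall : ∀ w ∈ peirceZero ξ η, ‖w‖ ≤ 1 → ‖(G ∘ₗ k) w‖ = ‖w‖ := fun w hw hw1 ↦ by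
    have h1 := hΔ.norm_sub _ _ (norm_rankOne_add hξ hη hw hw1) (norm_rankOne_of_unit hξ hη)
    rwa [hG1 w hw hw1, add_sub_cancel_left, add_sub_cancel_left] at h1
  rcases eq_or_ne z 0 with rfl | h0
  · simp
  have hn : ‖z‖ ≠ 0 := norm_ne_zero_iff.mpr h0
  have h1 : z = ‖z‖ • (‖z‖⁻¹ • z) := (smul_inv_smul₀ hn z).symm
  conv_lhs => rw [h1, map_smul, norm_smul, norm_norm]
  have h2 : ‖‖z‖⁻¹ • z‖ = 1 := by rw [norm_smul, norm_inv, norm_norm, inv_mul_cancel₀ hn]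
  rw [hsmall _ (Submodule.smul_mem _ _ hz) h2.le, h2, mul_one]

theorem IsSphereIsometry.exists_linear_peirceZero (hΔ : IsSphereIsometry Δ) {ξ η : H}
    (hξ : ‖ξ‖ = 1) (hη : ‖η‖ = 1) :
    ∃ G : (H →L[ℂ] H) →ₗ[ℝ] Y,
      (∀ z ∈ peirceZero ξ η, ‖z‖ ≤ 1 → Δ (rankOne ℂ ξ η + z) = Δ (rankOne ℂ ξ η) + G z) ∧
        ∀ z ∈ peirceZero ξ η, ‖G z‖ = ‖z‖ := by
  obtain ⟨j, k, hj1, hj2, hjk⟩ := exists_peirceZero_isometry (ι := (ℂ ∙ η)ᗮ.subtypeL)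
    (P := (ℂ ∙ η)ᗮ.orthogonalProjectionOnto) hξ hη (fun x ↦ rfl)
    (fun x ↦ Submodule.orthogonalProjectionOnto_mem_subspace_eq_self x) (fun x ↦ by
      have h1 : (ℂ ∙ η)ᗮ.starProjection x = x - (ℂ ∙ η).starProjection x :=
        Submodule.starProjection_orthogonal_val x
      rw [Submodule.starProjection_unit_singleton ℂ hη] at h1
      exact h1)
  exact hΔ.exists_linear_peirceZero_of_isometry hξ hη hj1 hj2 hjk

theorem IsSphereIsometry.map_neg_rankOne (hΔ : IsSphereIsometry Δ) {ξ η : H}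
    (hξ : ‖ξ‖ = 1) (hη : ‖η‖ = 1) : Δ (-rankOne ℂ ξ η) = -Δ (rankOne ℂ ξ η) := by
  have he := norm_rankOne_of_unit hξ hη
  have hc := convex_sphereStar_rankOne hξ hη
  refine hΔ.map_neg_of_center (A := sphereStar (rankOne ℂ ξ η)) (fun x hx ↦ hx.1)
    (fun x hx ↦ hΔ.exists_map_neg_eq_neg_map he hc hx)
    (fun x hx ↦ hΔ.exists_map_eq_neg_map_neg he hc hx) (self_mem_sphereStar he)
    (fun w hw ↦ ((mem_sphereStar_rankOne hξ hη).mp hw).2) fun x hx hxw ↦ ?_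
  rw [← sub_eq_zero]
  refine eq_zero_of_forall_norm_sub_le_one ((mem_sphereStar_rankOne hξ hη).mp hx).1
    fun z hz hz1 ↦ ?_
  have := hxw _ (rankOne_add_mem_sphereStar hξ hη hz hz1)
  rwa [← sub_sub] at this

theorem IsSphereIsometry.map_neg_rankOne_add_rankOne (hΔ : IsSphereIsometry Δ) {ξ₁ η₁ ξ₂ η₂ : H}
    (hξ₁ : ‖ξ₁‖ = 1) (hη₁ : ‖η₁‖ = 1) (hξ₂ : ‖ξ₂‖ = 1) (hη₂ : ‖η₂‖ = 1)
    (hξ : ⟪ξ₁, ξ₂⟫_ℂ = 0) (hη : ⟪η₁, η₂⟫_ℂ = 0) :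
    Δ (-(rankOne ℂ ξ₁ η₁ + rankOne ℂ ξ₂ η₂)) = -Δ (rankOne ℂ ξ₁ η₁ + rankOne ℂ ξ₂ η₂) := by
  have hξ' := inner_eq_zero_symm.mp hξ
  have hη' := inner_eq_zero_symm.mp hη
  set e₁ := rankOne ℂ ξ₁ η₁ with he₁
  set e₂ := rankOne ℂ ξ₂ η₂ with he₂
  have n₁ : ‖e₁‖ = 1 := norm_rankOne_of_unit hξ₁ hη₁
  have n₂ : ‖e₂‖ = 1 := norm_rankOne_of_unit hξ₂ hη₂
  have c₁ : Convex ℝ (sphereStar e₁) := convex_sphereStar_rankOne hξ₁ hη₁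
  have c₂ : Convex ℝ (sphereStar e₂) := convex_sphereStar_rankOne hξ₂ hη₂
  have m₁ : e₁ ∈ peirceZero ξ₂ η₂ := rankOne_mem_peirceZero hξ' hη'
  have m₂ : e₂ ∈ peirceZero ξ₁ η₁ := rankOne_mem_peirceZero hξ hη
  have hmem : ∀ x, x ∈ sphereStar e₁ ∩ sphereStar e₂ ↔
      x - (e₁ + e₂) ∈ peirceZero ξ₁ η₁ ⊓ peirceZero ξ₂ η₂ ∧ ‖x - (e₁ + e₂)‖ ≤ 1 := fun x ↦ by
    constructor
    · rintro ⟨hx₁, hx₂⟩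
      obtain ⟨p₁, q₁⟩ := (mem_sphereStar_rankOne hξ₁ hη₁).mp hx₁
      obtain ⟨p₂, q₂⟩ := (mem_sphereStar_rankOne hξ₂ hη₂).mp hx₂
      rw [← he₁] at p₁ q₁
      rw [← he₂] at p₂ q₂
      have h2 : (x - e₁) η₂ = ξ₂ := by
        rw [sub_apply, apply_eq_of_mem_sphereStar_rankOne hξ₂ hη₂ hx₂, m₁.1, sub_zero]
      have h3 := (sub_mem_peirceZero_of_apply_eq hξ₂ hη₂ q₁ h2).2
      rw [← he₂, sub_sub] at h3
      refine ⟨⟨?_, ?_⟩, h3⟩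
      · rw [SetLike.mem_coe, ← sub_sub]
        exact Submodule.sub_mem _ p₁ m₂
      · rw [SetLike.mem_coe, add_comm, ← sub_sub]
        exact Submodule.sub_mem _ p₂ m₁
    · rintro ⟨⟨p₁, p₂⟩, q⟩
      have hx₁ : x = e₁ + (e₂ + (x - (e₁ + e₂))) := by abel
      have hx₂ : x = e₂ + (e₁ + (x - (e₁ + e₂))) := by abel
      constructor
      · rw [hx₁]
        exact rankOne_add_mem_sphereStar hξ₁ hη₁ (Submodule.add_mem _ m₂ p₁)
          (norm_rankOne_add_le hξ₂ hη₂ p₂ q)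
      · rw [hx₂]
        exact rankOne_add_mem_sphereStar hξ₂ hη₂ (Submodule.add_mem _ m₁ p₂)
          (norm_rankOne_add_le hξ₁ hη₁ p₁ q)
  refine hΔ.map_neg_of_center (A := sphereStar e₁ ∩ sphereStar e₂) (fun x hx ↦ hx.1.1)
    (fun x hx ↦ ?_) (fun x hx ↦ ?_) ?_ (fun w hw ↦ ((hmem w).mp hw).2) fun x hx hxw ↦ ?_
  · obtain ⟨y, hy, hy'⟩ := hΔ.exists_map_neg_eq_neg_map n₁ c₁ hx.1
    obtain ⟨z, hz, hz'⟩ := hΔ.exists_map_neg_eq_neg_map n₂ c₂ hx.2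
    have := neg_injective (hΔ.inj (by rw [norm_neg, hy.1]) (by rw [norm_neg, hz.1])
      (hy'.trans hz'.symm))
    exact ⟨y, ⟨hy, this ▸ hz⟩, hy'⟩
  · obtain ⟨y, hy, hy'⟩ := hΔ.exists_map_eq_neg_map_neg n₁ c₁ hx.1
    obtain ⟨z, hz, hz'⟩ := hΔ.exists_map_eq_neg_map_neg n₂ c₂ hx.2
    have := hΔ.inj hy.1 hz.1 (hy'.trans hz'.symm)
    exact ⟨y, ⟨hy, this ▸ hz⟩, hy'⟩
  · rw [hmem]
    simp
  · rw [← sub_eq_zero]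
    refine eq_zero_of_forall_norm_sub_le_one ((hmem x).mp hx).1 fun z hz hz1 ↦ ?_
    have := hxw (e₁ + e₂ + z) (by rw [hmem, add_sub_cancel_left]; exact ⟨hz, hz1⟩)
    rwa [← sub_sub] at this

end Faces

section Functionals

open InnerProductSpace

variable {H : Type*} [NormedAddCommGroup H] [InnerProductSpace ℂ H]

/-- The real-linear functional `x ↦ re ⟪ξ, x η⟫`. -/
noncomputable def reCoeff (ξ η : H) : (H →L[ℂ] H) →ₗ[ℝ] ℝ where
  toFun x := (⟪ξ, x η⟫_ℂ).re
  map_add' x y := by simp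
  map_smul' r x := by
    have : (r • x) η = (r : ℂ) • x η := by simp
    rw [this, inner_smul_right]
    simp

theorem reCoeff_apply (ξ η : H) (x : H →L[ℂ] H) : reCoeff ξ η x = (⟪ξ, x η⟫_ℂ).re := rfl

theorem eq_zero_of_reCoeff_eq_zero {x : H →L[ℂ] H}
    (h : ∀ ξ η : H, ‖ξ‖ = 1 → ‖η‖ = 1 → reCoeff ξ η x = 0) : x = 0 := by
  by_contra hx
  have hx' : ∃ v, x v ≠ 0 := by
    by_contra! hv
    exact hx (ContinuousLinearMap.ext hv)
  obtain ⟨v, hv⟩ := hx'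
  have hv0 : ‖v‖ ≠ 0 := norm_ne_zero_iff.mpr (by rintro rfl; simp at hv)
  have hxv : ‖x v‖ ≠ 0 := norm_ne_zero_iff.mpr hv
  have := h ((‖x v‖⁻¹ : ℂ) • x v) ((‖v‖⁻¹ : ℂ) • v) (by rw [norm_smul]; simp [hxv])
    (by rw [norm_smul]; simp [hv0])
  rw [reCoeff_apply, map_smul, inner_smul_left, inner_smul_right, inner_self_eq_norm_sq_to_K] at this
  have h2 : (starRingEnd ℂ) (‖x v‖⁻¹ : ℂ) * ((‖v‖⁻¹ : ℂ) * (‖x v‖ : ℂ) ^ 2) =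
      ((‖v‖⁻¹ * ‖x v‖ : ℝ) : ℂ) := by
    have : (‖x v‖ : ℂ) ≠ 0 := by exact_mod_cast hxv
    simp only [map_inv₀, Complex.conj_ofReal, Complex.ofReal_mul, Complex.ofReal_inv]
    field_simp
  have h3 := (congrArg Complex.re h2).symm.trans this
  rw [Complex.ofReal_re] at h3
  exact mul_ne_zero (inv_ne_zero hv0) hxv h3

theorem abs_reCoeff_le {ξ η : H} (hξ : ‖ξ‖ = 1) (hη : ‖η‖ = 1) (x : H →L[ℂ] H) :
    |reCoeff ξ η x| ≤ ‖x‖ := by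
  refine (Complex.abs_re_le_norm _).trans ((norm_inner_le_norm _ _).trans ?_)
  have := x.le_opNorm η
  rwa [hη, mul_one, ← one_mul ‖x η‖, ← hξ] at this

theorem reCoeff_rankOne_self {ξ η : H} (hξ : ‖ξ‖ = 1) (hη : ‖η‖ = 1) :
    reCoeff ξ η (rankOne ℂ ξ η) = 1 := by
  rw [reCoeff_apply, rankOne_apply_right hη, inner_self_eq_norm_sq_to_K, hξ]
  simp

/-- The operator norm is smooth at rank-one partial isometries. -/
theorem norm_rankOne_add_smul_sq_le {ξ η : H} (hξ : ‖ξ‖ = 1) (hη : ‖η‖ = 1) {y : H →L[ℂ] H}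
    (hy : reCoeff ξ η y = 0) (t : ℝ) :
    ‖rankOne ℂ ξ η + t • y‖ ^ 2 ≤ 1 + 2 * t ^ 2 * ‖y‖ ^ 2 := by
  have key : ∀ h, ‖(rankOne ℂ ξ η + t • y) h‖ ≤ √(1 + 2 * t ^ 2 * ‖y‖ ^ 2) * ‖h‖ := fun h ↦ by
    have h4 := norm_sq_eq_norm_inner_sq_add hη h
    have hsub : h = ⟪η, h⟫_ℂ • η + (h - ⟪η, h⟫_ℂ • η) := (add_sub_cancel _ _).symm
    set a := ⟪η, h⟫_ℂ with ha
    set h' := h - a • η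
    have e1 : (rankOne ℂ ξ η + t • y) h = a • ξ + (t : ℂ) • y h := by simp [← ha]
    have e2 := @norm_add_sq ℂ H _ _ _ (a • ξ) ((t : ℂ) • y h)
    have e3 : (⟪a • ξ, (t : ℂ) • y h⟫_ℂ).re = t * (⟪a • ξ, y h'⟫_ℂ).re := by
      have e0 : ⟪a • ξ, a • y η⟫_ℂ = (Complex.normSq a : ℂ) * ⟪ξ, y η⟫_ℂ := by
        rw [inner_smul_left, inner_smul_right, ← Complex.mul_conj]
        ring
      conv_lhs => rw [hsub]
      rw [inner_smul_right, map_add, map_smul, inner_add_right, e0, Complex.re_ofReal_mul,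
        Complex.add_re, Complex.re_ofReal_mul, ← reCoeff_apply, hy, mul_zero, zero_add]
    have e4 : |(⟪a • ξ, y h'⟫_ℂ).re| ≤ ‖a‖ * (‖y‖ * ‖h'‖) := by
      refine (Complex.abs_re_le_norm _).trans ((norm_inner_le_norm _ _).trans ?_)
      rw [norm_smul, hξ, mul_one]
      gcongr
      exact y.le_opNorm _
    have e5 : ‖y h‖ ^ 2 ≤ ‖y‖ ^ 2 * ‖h‖ ^ 2 := by
      rw [← mul_pow]
      exact pow_le_pow_left₀ (norm_nonneg _) (y.le_opNorm h) 2
    have e6 : t * (⟪a • ξ, y h'⟫_ℂ).re ≤ |t| * (‖a‖ * (‖y‖ * ‖h'‖)) := by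
      refine (le_abs_self _).trans ?_
      rw [abs_mul]
      gcongr
    have e7 : 2 * (|t| * (‖a‖ * (‖y‖ * ‖h'‖))) ≤ t ^ 2 * ‖y‖ ^ 2 * ‖a‖ ^ 2 + ‖h'‖ ^ 2 := by
      have := sq_nonneg (|t| * ‖a‖ * ‖y‖ - ‖h'‖)
      rw [← sq_abs t]
      nlinarith
    have e8 : t ^ 2 * ‖y‖ ^ 2 * ‖a‖ ^ 2 ≤ t ^ 2 * ‖y‖ ^ 2 * ‖h‖ ^ 2 := by
      rw [h4]
      nlinarith [mul_nonneg (mul_nonneg (sq_nonneg t) (sq_nonneg ‖y‖)) (sq_nonneg ‖h'‖)]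
    have e9 : t ^ 2 * ‖y h‖ ^ 2 ≤ t ^ 2 * (‖y‖ ^ 2 * ‖h‖ ^ 2) := by gcongr
    refine abs_le_of_sq_le_sq' ?_ (by positivity) |>.2
    rw [mul_pow, Real.sq_sqrt (by positivity), e1, e2]
    change _ + 2 * (⟪a • ξ, (t : ℂ) • y h⟫_ℂ).re + _ ≤ _
    rw [e3, norm_smul, norm_smul, hξ, mul_pow, mul_pow, Complex.norm_real, Real.norm_eq_abs, sq_abs]
    nlinarith
  have := ContinuousLinearMap.opNorm_le_bound _ (Real.sqrt_nonneg _) key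
  calc ‖rankOne ℂ ξ η + t • y‖ ^ 2 ≤ √(1 + 2 * t ^ 2 * ‖y‖ ^ 2) ^ 2 :=
        pow_le_pow_left₀ (norm_nonneg _) this 2
    _ = _ := Real.sq_sqrt (by positivity)

theorem eq_reCoeff_of_le_norm {ξ η : H} (hξ : ‖ξ‖ = 1) (hη : ‖η‖ = 1)
    {N : Submodule ℝ (H →L[ℂ] H)} (he : rankOne ℂ ξ η ∈ N) {L : (H →L[ℂ] H) →ₗ[ℝ] ℝ}
    (hL : ∀ z ∈ N, L z ≤ ‖z‖) (hLe : L (rankOne ℂ ξ η) = 1) {z : H →L[ℂ] H} (hz : z ∈ N) :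
    L z = reCoeff ξ η z := by
  set y := z - reCoeff ξ η z • rankOne ℂ ξ η with hy
  have hyN : y ∈ N := N.sub_mem hz (N.smul_mem _ he)
  have hy0 : reCoeff ξ η y = 0 := by
    rw [hy, map_sub, map_smul, reCoeff_rankOne_self hξ hη]
    simp
  have hLy : L y = L z - reCoeff ξ η z := by
    rw [hy, map_sub, map_smul, hLe]
    simp
  rw [← sub_eq_zero, ← hLy]
  set s := L y with hs
  set M := ‖y‖ ^ 2 + 1 with hM
  have hM0 : 0 < M := by positivity
  have h1 := norm_rankOne_add_smul_sq_le hξ hη hy0 (s / (2 * M))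
  have h2 := hL _ (N.add_mem he (N.smul_mem (s / (2 * M)) hyN))
  rw [map_add, map_smul, hLe, ← hs, smul_eq_mul] at h2
  have h3 : s / (2 * M) * s = s ^ 2 / M / 2 := by field_simp
  have h4 : 0 ≤ s ^ 2 / M / 2 := by positivity
  rw [h3] at h2
  have h5 := pow_le_pow_left₀ (by linarith) h2 2
  have h6 : 2 * (s / (2 * M)) ^ 2 * ‖y‖ ^ 2 ≤ s ^ 2 / M / 2 := by
    have h7 : 2 * (s / (2 * M)) ^ 2 * ‖y‖ ^ 2 = s ^ 2 / M / 2 * (‖y‖ ^ 2 / M) := by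
      field_simp
    rw [h7]
    refine mul_le_of_le_one_right h4 ?_
    rw [div_le_one hM0]
    linarith
  have h8 : s ^ 2 / M ≤ 0 := by nlinarith
  have h9 : s ^ 2 ≤ 0 := by
    rwa [div_le_iff₀ hM0, zero_mul] at h8
  exact pow_eq_zero_iff two_ne_zero |>.mp (le_antisymm h9 (sq_nonneg _))

theorem exists_unit_inner_eq_zero (hH : 3 ≤ Module.rank ℂ H) (a b : H) :
    ∃ u : H, ‖u‖ = 1 ∧ ⟪a, u⟫_ℂ = 0 ∧ ⟪b, u⟫_ℂ = 0 := by
  have hne : (Submodule.span ℂ ({a, b} : Set H))ᗮ ≠ ⊥ := fun hbot ↦ by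
    have : FiniteDimensional ℂ (Submodule.span ℂ ({a, b} : Set H)) :=
      FiniteDimensional.span_of_finite ℂ (Set.toFinite _)
    rw [Submodule.orthogonal_eq_bot_iff] at hbot
    have h1 := rank_span_le (R := ℂ) ({a, b} : Set H)
    rw [hbot, rank_top] at h1
    have h2 : Cardinal.mk ({a, b} : Set H) ≤ 2 := by
      refine (Cardinal.mk_insert_le).trans ?_
      rw [Cardinal.mk_singleton]
      norm_num
    have h3 := hH.trans (h1.trans h2)
    norm_num at h3
  obtain ⟨v, hv, hv0⟩ := Submodule.exists_mem_ne_zero_of_ne_bot hne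
  rw [Submodule.mem_orthogonal] at hv
  have hn : ‖v‖ ≠ 0 := norm_ne_zero_iff.mpr hv0
  refine ⟨(‖v‖⁻¹ : ℂ) • v, ?_, ?_, ?_⟩
  · rw [norm_smul]
    simp [hn]
  · rw [inner_smul_right, hv a (Submodule.subset_span (by simp)), mul_zero]
  · rw [inner_smul_right, hv b (Submodule.subset_span (by simp)), mul_zero]

variable [CompleteSpace H]

/-- The compression of `x` to the Peirce-zero space of `rankOne ℂ k h`. -/
noncomputable def peirceProj (k h : H) (x : H →L[ℂ] H) : H →L[ℂ] H :=
  x - rankOne ℂ k (ContinuousLinearMap.adjoint x k) - rankOne ℂ (x h - ⟪k, x h⟫_ℂ • k) h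

theorem peirceProj_apply (k h : H) (x : H →L[ℂ] H) (v : H) :
    peirceProj k h x v =
      x (v - ⟪h, v⟫_ℂ • h) - ⟪k, x (v - ⟪h, v⟫_ℂ • h)⟫_ℂ • k := by
  change x v - ⟪ContinuousLinearMap.adjoint x k, v⟫_ℂ • k -
    ⟪h, v⟫_ℂ • (x h - ⟪k, x h⟫_ℂ • k) = _
  rw [ContinuousLinearMap.adjoint_inner_left, map_sub, map_smul, inner_sub_right, inner_smul_right]
  module

theorem norm_peirceProj_le {k h : H} (hk : ‖k‖ = 1) (hh : ‖h‖ = 1) (x : H →L[ℂ] H) :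
    ‖peirceProj k h x‖ ≤ ‖x‖ := by
  refine ContinuousLinearMap.opNorm_le_bound _ (norm_nonneg _) fun v ↦ ?_
  rw [peirceProj_apply]
  refine (norm_sub_inner_smul_le hk _).trans ((x.le_opNorm _).trans ?_)
  gcongr
  exact norm_sub_inner_smul_le hh v

theorem peirceProj_mem {k h : H} (hk : ‖k‖ = 1) (hh : ‖h‖ = 1) (x : H →L[ℂ] H) :
    peirceProj k h x ∈ peirceZero k h := by
  refine ⟨?_, fun v ↦ ?_⟩
  · rw [peirceProj_apply, inner_self_eq_norm_sq_to_K, hh]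
    simp
  · rw [peirceProj_apply, inner_sub_right, inner_smul_right, inner_self_eq_norm_sq_to_K, hk]
    simp only [one_pow, mul_one, sub_self, RCLike.ofReal_one]

theorem peirceProj_mem_of_mem {ξ η k h : H} {x : H →L[ℂ] H} (hx : x ∈ peirceZero ξ η)
    (hk : ⟪ξ, k⟫_ℂ = 0) (hh : ⟪η, h⟫_ℂ = 0) : peirceProj k h x ∈ peirceZero ξ η := by
  refine ⟨?_, fun v ↦ ?_⟩
  · rw [peirceProj_apply, inner_eq_zero_symm.mp hh, zero_smul, sub_zero, hx.1, inner_zero_right,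
      zero_smul, sub_zero]
  · rw [peirceProj_apply, inner_sub_right, inner_smul_right, hx.2, hk, mul_zero, sub_zero]

end Functionals

section MazurUlam

open InnerProductSpace

variable {H : Type*} [NormedAddCommGroup H] [InnerProductSpace ℂ H] [CompleteSpace H]
  {Y : Type*} [NormedAddCommGroup Y] [NormedSpace ℝ Y] {Δ : (H →L[ℂ] H) → Y}

/-- `G` is the linear part of `Δ` on the face of the unit ball at `rankOne ℂ ξ η`. -/
structure IsFaceMap (Δ : (H →L[ℂ] H) → Y) (ξ η : H) (G : (H →L[ℂ] H) →ₗ[ℝ] Y) : Prop where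
  map_add : ∀ z ∈ peirceZero ξ η, ‖z‖ ≤ 1 →
    Δ (rankOne ℂ ξ η + z) = Δ (rankOne ℂ ξ η) + G z
  norm_map : ∀ z ∈ peirceZero ξ η, ‖G z‖ = ‖z‖

theorem IsSphereIsometry.exists_isFaceMap (hΔ : IsSphereIsometry Δ) {ξ η : H}
    (hξ : ‖ξ‖ = 1) (hη : ‖η‖ = 1) : ∃ G, IsFaceMap Δ ξ η G :=
  let ⟨G, h1, h2⟩ := hΔ.exists_linear_peirceZero hξ hη
  ⟨G, h1, h2⟩

/-- On rank-one operators of the Peirce-zero space, the linear part of `Δ` agrees with `Δ`. -/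
theorem IsFaceMap.apply_rankOne (hΔ : IsSphereIsometry Δ) {ξ₁ η₁ ξ₂ η₂ : H}
    {G : (H →L[ℂ] H) →ₗ[ℝ] Y} (hG : IsFaceMap Δ ξ₁ η₁ G)
    (hξ₁ : ‖ξ₁‖ = 1) (hη₁ : ‖η₁‖ = 1) (hξ₂ : ‖ξ₂‖ = 1) (hη₂ : ‖η₂‖ = 1)
    (hξ : ⟪ξ₁, ξ₂⟫_ℂ = 0) (hη : ⟪η₁, η₂⟫_ℂ = 0) :
    G (rankOne ℂ ξ₂ η₂) = Δ (rankOne ℂ ξ₂ η₂) := by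
  have n₁ := norm_rankOne_of_unit hξ₁ hη₁
  have n₂ := norm_rankOne_of_unit hξ₂ hη₂
  have m₂ := rankOne_mem_peirceZero hξ hη
  have m₁ := rankOne_mem_peirceZero (inner_eq_zero_symm.mp hξ) (inner_eq_zero_symm.mp hη)
  have m₁' : rankOne ℂ ξ₁ η₁ ∈ peirceZero (-ξ₂) η₂ := by rwa [peirceZero_neg]
  have hodd := hΔ.map_neg_rankOne_add_rankOne hξ₁ hη₁ hξ₂ hη₂ hξ hη
  have hodd₂ := hΔ.map_neg_rankOne hξ₂ hη₂
  obtain ⟨G₂, hG₂⟩ := hΔ.exists_isFaceMap hξ₂ hη₂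
  obtain ⟨G₂', hG₂'⟩ := hΔ.exists_isFaceMap (show ‖-ξ₂‖ = 1 by rwa [norm_neg]) hη₂
  have hneg : rankOne ℂ (-ξ₂) η₂ = -rankOne ℂ ξ₂ η₂ := by simp
  have a₁ := hG.map_add _ m₂ n₂.le
  have a₂ := hG₂.map_add _ m₁ n₁.le
  have a₃ := hG.map_add _ (Submodule.neg_mem _ m₂) (by rw [norm_neg, n₂])
  have a₄ := hG₂'.map_add _ m₁' n₁.le
  have a₅ := hG₂'.map_add _ (Submodule.neg_mem _ m₁') (by rw [norm_neg, n₁])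
  rw [hneg] at a₄ a₅
  rw [← neg_add, hodd₂, add_comm (rankOne ℂ ξ₂ η₂), hodd, map_neg] at a₅
  rw [add_comm (-rankOne ℂ ξ₂ η₂), hodd₂] at a₄
  rw [add_comm (rankOne ℂ ξ₂ η₂)] at a₂
  rw [map_neg] at a₃
  set x₁ := Δ (rankOne ℂ ξ₁ η₁)
  set x₂ := Δ (rankOne ℂ ξ₂ η₂)
  set g := G (rankOne ℂ ξ₂ η₂)
  set g₂ := G₂ (rankOne ℂ ξ₁ η₁)
  set g₂' := G₂' (rankOne ℂ ξ₁ η₁)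
  have b₁ : x₁ + g = x₂ + g₂ := a₁.symm.trans a₂
  have b₂ : x₁ + -g = -x₂ + g₂' := a₃.symm.trans a₄
  have b₃ : g₂ = g₂' := by
    rw [a₂, neg_add] at a₅
    exact neg_injective (add_left_cancel a₅)
  rw [← b₃] at b₂
  have b₄ : (2 : ℝ) • g = (2 : ℝ) • x₂ := by
    have h1 : (2 : ℝ) • g = (x₁ + g) - (x₁ + -g) := by module
    rw [h1, b₁, b₂]
    module
  exact smul_right_injective _ (two_ne_zero' ℝ) b₄

/-- A functional norming the image of a rank-one partial isometry restricts to a matrix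
coefficient on every orthogonal face. -/
theorem IsFaceMap.dual_apply_eq (hΔ : IsSphereIsometry Δ) {ξ η k h : H}
    {G : (H →L[ℂ] H) →ₗ[ℝ] Y} (hG : IsFaceMap Δ k h G) (hk : ‖k‖ = 1) (hh : ‖h‖ = 1)
    (hξ : ‖ξ‖ = 1) (hη : ‖η‖ = 1) (hξk : ⟪ξ, k⟫_ℂ = 0) (hηh : ⟪η, h⟫_ℂ = 0)
    {ψ : StrongDual ℝ Y} (hψ : ‖ψ‖ ≤ 1) (hψe : ψ (Δ (rankOne ℂ ξ η)) = 1)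
    {z : H →L[ℂ] H} (hz : z ∈ peirceZero k h) : ψ (G z) = reCoeff ξ η z := by
  have hkξ := inner_eq_zero_symm.mp hξk
  have hhη := inner_eq_zero_symm.mp hηh
  refine eq_reCoeff_of_le_norm hξ hη (rankOne_mem_peirceZero hkξ hhη)
    (L := ψ.toLinearMap ∘ₗ G) (fun w hw ↦ ?_) ?_ hz
  · rw [← hG.norm_map w hw]
    exact (le_abs_self _).trans ((ψ.le_opNorm _).trans
      (mul_le_of_le_one_left (norm_nonneg _) hψ))
  · rw [← hψe, ← hG.apply_rankOne hΔ hk hh hξ hη hkξ hhη]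
    rfl

theorem IsSphereIsometry.dual_map_rankOne (hΔ : IsSphereIsometry Δ) (hH : 3 ≤ Module.rank ℂ H)
    {ξ η : H} (hξ : ‖ξ‖ = 1) (hη : ‖η‖ = 1) {ψ : StrongDual ℝ Y} (hψ : ‖ψ‖ ≤ 1)
    (hψe : ψ (Δ (rankOne ℂ ξ η)) = 1) {ξ' η' : H} (hξ' : ‖ξ'‖ = 1) (hη' : ‖η'‖ = 1) :
    ψ (Δ (rankOne ℂ ξ' η')) = reCoeff ξ η (rankOne ℂ ξ' η') := by
  obtain ⟨k, hk, hξk, hξk'⟩ := exists_unit_inner_eq_zero hH ξ ξ'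
  obtain ⟨h, hh, hηh, hηh'⟩ := exists_unit_inner_eq_zero hH η η'
  obtain ⟨G, hG⟩ := hΔ.exists_isFaceMap hk hh
  have hkξ' := inner_eq_zero_symm.mp hξk'
  have hhη' := inner_eq_zero_symm.mp hηh'
  rw [← hG.apply_rankOne hΔ hk hh hξ' hη' hkξ' hhη']
  exact hG.dual_apply_eq hΔ hk hh hξ hη hξk hηh hψ hψe (rankOne_mem_peirceZero hkξ' hhη')

theorem LinearMap.eq_of_eq_on_unit {X : Type*} [NormedAddCommGroup X] [NormedSpace ℝ X]
    {L M : X →ₗ[ℝ] ℝ} {x : X} (h : x ≠ 0 → L (‖x‖⁻¹ • x) = M (‖x‖⁻¹ • x)) : L x = M x := by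
  rcases eq_or_ne x 0 with rfl | hx
  · simp
  have h1 := h hx
  rw [map_smul, map_smul] at h1
  exact smul_right_injective ℝ (inv_ne_zero (norm_ne_zero_iff.mpr hx)) h1

theorem IsSphereIsometry.dual_map_rankOne_add (hΔ : IsSphereIsometry Δ)
    (hH : 3 ≤ Module.rank ℂ H) {ξ η : H} (hξ : ‖ξ‖ = 1) (hη : ‖η‖ = 1) {ψ : StrongDual ℝ Y}
    (hψ : ‖ψ‖ ≤ 1) (hψe : ψ (Δ (rankOne ℂ ξ η)) = 1) {ξ' η' : H} (hξ' : ‖ξ'‖ = 1)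
    (hη' : ‖η'‖ = 1) {z : H →L[ℂ] H} (hz : z ∈ peirceZero ξ' η') (hz1 : ‖z‖ ≤ 1) :
    ψ (Δ (rankOne ℂ ξ' η' + z)) = reCoeff ξ η (rankOne ℂ ξ' η' + z) := by
  have hrank := fun {ξ' η' : H} (hξ' : ‖ξ'‖ = 1) (hη' : ‖η'‖ = 1) ↦
    hΔ.dual_map_rankOne hH hξ hη hψ hψe hξ' hη'
  obtain ⟨k, hk, hξk, hξk'⟩ := exists_unit_inner_eq_zero hH ξ ξ'
  obtain ⟨h, hh, hηh, hηh'⟩ := exists_unit_inner_eq_zero hH η η'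
  have hkξ' := inner_eq_zero_symm.mp hξk'
  have hhη' := inner_eq_zero_symm.mp hηh'
  obtain ⟨G, hG⟩ := hΔ.exists_isFaceMap hξ' hη'
  obtain ⟨G₃, hG₃⟩ := hΔ.exists_isFaceMap hk hh
  -- the linear part agrees with the coefficient on rank-one operators
  have hone : ∀ p q : H, ⟪ξ', p⟫_ℂ = 0 → ⟪η', q⟫_ℂ = 0 →
      (ψ.toLinearMap ∘ₗ G) (rankOne ℂ p q) = reCoeff ξ η (rankOne ℂ p q) := fun p q hp hq ↦ by
    refine LinearMap.eq_of_eq_on_unit fun hne ↦ ?_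
    have hpq : p ≠ 0 ∧ q ≠ 0 := by
      refine ⟨?_, ?_⟩ <;> rintro rfl <;> simp at hne
    have hp0 := norm_ne_zero_iff.mpr hpq.1
    have hq0 := norm_ne_zero_iff.mpr hpq.2
    have h1 : ‖rankOne ℂ p q‖⁻¹ • rankOne ℂ p q =
        rankOne ℂ ((‖p‖⁻¹ : ℂ) • p) ((‖q‖⁻¹ : ℂ) • q) := by
      ext v
      rw [norm_rankOne, mul_inv, ← Complex.coe_smul]
      simp only [_root_.smul_apply, InnerProductSpace.rankOne_apply,
        inner_smul_left, smul_smul, map_inv₀, Complex.conj_ofReal, Complex.ofReal_mul,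
        Complex.ofReal_inv]
      congr 1
      ring
    have u1 : ‖(‖p‖⁻¹ : ℂ) • p‖ = 1 := by rw [norm_smul]; simp [hp0]
    have u2 : ‖(‖q‖⁻¹ : ℂ) • q‖ = 1 := by rw [norm_smul]; simp [hq0]
    rw [h1, ← hrank u1 u2, ← hG.apply_rankOne hΔ hξ' hη' u1 u2
      (by rw [inner_smul_right, hp, mul_zero]) (by rw [inner_smul_right, hq, mul_zero])]
    rfl
  -- and on the compressions to the complement of an orthogonal face
  have hcomp : ∀ w ∈ peirceZero ξ' η', w ∈ peirceZero k h →
      (ψ.toLinearMap ∘ₗ G) w = reCoeff ξ η w := fun w hw hw' ↦ by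
    refine LinearMap.eq_of_eq_on_unit fun hne ↦ ?_
    set y := ‖w‖⁻¹ • w with hy
    have hy1 : ‖y‖ ≤ 1 := by
      rw [hy, norm_smul, norm_inv, norm_norm, inv_mul_cancel₀ (norm_ne_zero_iff.mpr hne)]
    have my : y ∈ peirceZero ξ' η' := Submodule.smul_mem _ _ hw
    have my' : y ∈ peirceZero k h := Submodule.smul_mem _ _ hw'
    have m₃ := rankOne_mem_peirceZero hξk' hηh'
    have m' := rankOne_mem_peirceZero hkξ' hhη'
    have b₁ := hG.map_add _ (Submodule.add_mem _ m₃ my) (norm_rankOne_add_le hk hh my' hy1)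
    have b₂ := hG₃.map_add _ (Submodule.add_mem _ m' my') (norm_rankOne_add_le hξ' hη' my hy1)
    rw [add_left_comm, b₁, map_add, hG.apply_rankOne hΔ hξ' hη' hk hh hξk' hηh'] at b₂
    have b₃ := congrArg ψ b₂
    rw [map_add, map_add, map_add, hG₃.dual_apply_eq hΔ hk hh hξ hη hξk hηh hψ hψe
      (Submodule.add_mem _ m' my'), map_add, hrank hξ' hη'] at b₃
    change ψ (G y) = _
    linarith
  have hdec : z = peirceProj k h z + rankOne ℂ k (ContinuousLinearMap.adjoint z k) +
      rankOne ℂ (z h - ⟪k, z h⟫_ℂ • k) h := by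
    rw [peirceProj]
    abel
  have hGz : (ψ.toLinearMap ∘ₗ G) z = reCoeff ξ η z := by
    rw [hdec, map_add, map_add, map_add, map_add,
      hcomp _ (peirceProj_mem_of_mem hz hξk' hηh') (peirceProj_mem hk hh z),
      hone _ _ hξk' (by rw [ContinuousLinearMap.adjoint_inner_right, hz.1, inner_zero_left]),
      hone _ _ (by rw [inner_sub_right, inner_smul_right, hz.2, hξk', mul_zero, sub_zero]) hηh']
  rw [hG.map_add z hz hz1, map_add, map_add, hrank hξ' hη', ← hGz]
  rfl

/-- Operators on the faces at rank-one partial isometries are dense in the unit sphere. -/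
theorem exists_rankOne_add_near {x : H →L[ℂ] H} (hx : ‖x‖ = 1) {ε : ℝ} (hε : 0 < ε) :
    ∃ (k h : H) (z : H →L[ℂ] H), ‖k‖ = 1 ∧ ‖h‖ = 1 ∧ z ∈ peirceZero k h ∧ ‖z‖ ≤ 1 ∧
      ‖x - (rankOne ℂ k h + z)‖ ≤ ε := by
  obtain ⟨v, hv1, hv⟩ := x.exists_lt_apply_of_lt_opNorm
    (show max 0 (1 - ε ^ 2 / 2) < ‖x‖ by
      rw [hx]
      exact max_lt one_pos (by linarith [pow_pos hε 2]))
  obtain ⟨hv0, hvε⟩ := max_lt_iff.mp hv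
  have hvn : v ≠ 0 := by
    rintro rfl
    simp at hv0
  have hvp : 0 < ‖v‖ := norm_pos_iff.mpr hvn
  set h : H := (‖v‖⁻¹ : ℂ) • v with hh
  have hh1 : ‖h‖ = 1 := by
    rw [hh, norm_smul]
    simp [hvp.ne']
  have hxh : ‖x h‖ = ‖v‖⁻¹ * ‖x v‖ := by
    rw [hh, map_smul, norm_smul]
    simp
  have hc : ‖x v‖ ≤ ‖x h‖ := by
    rw [hxh]
    exact le_mul_of_one_le_left (norm_nonneg _) ((one_le_inv₀ hvp).mpr hv1.le)
  have hc0 : 0 < ‖x h‖ := hv0.trans_le hc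
  set k : H := (‖x h‖⁻¹ : ℂ) • x h with hk
  have hk1 : ‖k‖ = 1 := by
    rw [hk, norm_smul]
    simp [hc0.ne']
  have hxk : x h = (‖x h‖ : ℂ) • k := by
    rw [hk, smul_smul, mul_inv_cancel₀ (by exact_mod_cast hc0.ne'), one_smul]
  have hkx : ⟪k, x h⟫_ℂ = ‖x h‖ := by
    conv_lhs => rw [hxk]
    rw [inner_smul_right, inner_self_eq_norm_sq_to_K, hk1]
    simp
  refine ⟨k, h, peirceProj k h x, hk1, hh1, peirceProj_mem hk1 hh1 x,
    (norm_peirceProj_le hk1 hh1 x).trans hx.le, ?_⟩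
  have e1 : x - (rankOne ℂ k h + peirceProj k h x) =
      rankOne ℂ k (ContinuousLinearMap.adjoint x k - h) := by
    have : x h - ⟪k, x h⟫_ℂ • k = 0 := by
      rw [hkx, sub_eq_zero]
      exact hxk
    rw [peirceProj, this, map_sub]
    simp only [map_zero, _root_.zero_apply, sub_zero]
    abel
  rw [e1, norm_rankOne, hk1, one_mul]
  set w := ContinuousLinearMap.adjoint x k with hw
  have hw1 : ‖w‖ ≤ 1 := by
    refine ((ContinuousLinearMap.adjoint x).le_opNorm k).trans ?_
    rw [hk1, mul_one, LinearIsometryEquiv.norm_map, hx]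
  have h1 : ⟪w, h⟫_ℂ = ‖x h‖ := by
    rw [hw, ContinuousLinearMap.adjoint_inner_left, hkx]
  have h2 := @norm_sub_sq ℂ H _ _ _ w h
  have h3 : RCLike.re (⟪w, h⟫_ℂ) = ‖x h‖ := by
    rw [h1]
    exact Complex.ofReal_re _
  rw [h3, hh1] at h2
  refine abs_le_of_sq_le_sq' ?_ hε.le |>.2
  nlinarith [norm_nonneg w]

theorem IsSphereIsometry.dual_map_eq_reCoeff (hΔ : IsSphereIsometry Δ)
    (hH : 3 ≤ Module.rank ℂ H) {ξ η : H} (hξ : ‖ξ‖ = 1) (hη : ‖η‖ = 1) {ψ : StrongDual ℝ Y}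
    (hψ : ‖ψ‖ ≤ 1) (hψe : ψ (Δ (rankOne ℂ ξ η)) = 1) {x : H →L[ℂ] H} (hx : ‖x‖ = 1) :
    ψ (Δ x) = reCoeff ξ η x := by
  rw [← sub_eq_zero, ← abs_nonpos_iff]
  refine le_of_forall_pos_le_add fun ε hε ↦ ?_
  obtain ⟨k, h, z, hk, hh, hz, hz1, hxz⟩ := exists_rankOne_add_near hx (half_pos hε)
  have h1 := hΔ.dual_map_rankOne_add hH hξ hη hψ hψe hk hh hz hz1
  have h2 : |ψ (Δ x) - ψ (Δ (rankOne ℂ k h + z))| ≤ ε / 2 := by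
    rw [← map_sub]
    refine (ψ.le_opNorm _).trans ((mul_le_of_le_one_left (norm_nonneg _) hψ).trans ?_)
    rwa [hΔ.norm_sub _ _ hx (norm_rankOne_add hk hh hz hz1)]
  have h3 : |reCoeff ξ η x - reCoeff ξ η (rankOne ℂ k h + z)| ≤ ε / 2 := by
    rw [← map_sub]
    exact (abs_reCoeff_le hξ hη _).trans hxz
  rw [h1] at h2
  rw [abs_le] at *
  constructor <;> linarith [h2.1, h2.2, h3.1, h3.2]

/-- The positively homogeneous extension of a surjective isometry between unit spheres is
real-linear as soon as the target carries enough functionals pulling back to linear ones. -/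
theorem IsSphereIsometry.exists_linear_extension {X Y : Type*} [NormedAddCommGroup X]
    [NormedSpace ℝ X] [NormedAddCommGroup Y] [NormedSpace ℝ Y] {Δ : X → Y}
    (hΔ : IsSphereIsometry Δ) {ι : Type*} {ψ : ι → Y →ₗ[ℝ] ℝ} {φ : ι → X →ₗ[ℝ] ℝ}
    (h : ∀ i x, ‖x‖ = 1 → ψ i (Δ x) = φ i x) (hφ : ∀ x, (∀ i, φ i x = 0) → x = 0) :
    ∃ T : X →ₗ[ℝ] Y, (∀ x, ‖T x‖ = ‖x‖) ∧ Function.Surjective T ∧ ∀ x, ‖x‖ = 1 → T x = Δ x := by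
  have hunit : ∀ {x : X}, x ≠ 0 → ‖‖x‖⁻¹ • x‖ = 1 := fun hx ↦ by
    rw [norm_smul, norm_inv, norm_norm, inv_mul_cancel₀ (norm_ne_zero_iff.mpr hx)]
  have hψ : ∀ y, (∀ i, ψ i y = 0) → y = 0 := fun y hy ↦ by
    by_contra hy0
    have hn : ‖y‖ ≠ 0 := norm_ne_zero_iff.mpr hy0
    obtain ⟨x, hx, hxy⟩ := hΔ.surj (‖y‖⁻¹ • y) (by
      rw [norm_smul, norm_inv, norm_norm, inv_mul_cancel₀ hn])
    have := hφ x fun i ↦ by rw [← h i x hx, hxy, map_smul, hy, smul_zero]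
    rw [this, norm_zero] at hx
    exact zero_ne_one hx
  obtain ⟨T, hT⟩ : ∃ T : X → Y, ∀ x, T x = ‖x‖ • Δ (‖x‖⁻¹ • x) := ⟨_, fun _ ↦ rfl⟩
  have hψT : ∀ i x, ψ i (T x) = φ i x := fun i x ↦ by
    rcases eq_or_ne x 0 with rfl | hx
    · simp [hT]
    · rw [hT, map_smul, h i _ (hunit hx), map_smul, smul_inv_smul₀ (norm_ne_zero_iff.mpr hx)]
  refine ⟨⟨⟨T, fun x y ↦ ?_⟩, fun r x ↦ ?_⟩, fun x ↦ ?_, fun y ↦ ?_, fun x hx ↦ ?_⟩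
  · rw [← sub_eq_zero]
    exact hψ _ fun i ↦ by rw [map_sub, map_add, hψT, hψT, hψT, map_add, sub_self]
  · rw [← sub_eq_zero]
    change T (r • x) - r • T x = 0
    exact hψ _ fun i ↦ by
      rw [map_sub, map_smul, hψT, hψT, map_smul, sub_self]
  · change ‖T x‖ = ‖x‖
    rcases eq_or_ne x 0 with rfl | hx
    · simp [hT]
    · rw [hT, norm_smul, norm_norm, hΔ.norm_map _ (hunit hx), mul_one]
  · rcases eq_or_ne y 0 with rfl | hy
    · exact ⟨0, by change T 0 = 0; simp [hT]⟩
    have hn : ‖y‖ ≠ 0 := norm_ne_zero_iff.mpr hy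
    obtain ⟨x, hx, hxy⟩ := hΔ.surj (‖y‖⁻¹ • y) (by
      rw [norm_smul, norm_inv, norm_norm, inv_mul_cancel₀ hn])
    refine ⟨‖y‖ • x, ?_⟩
    change T _ = y
    rw [hT, norm_smul, norm_norm, hx, mul_one, inv_smul_smul₀ hn, hxy, smul_inv_smul₀ hn]
  · change T x = Δ x
    rw [hT]
    simp [hx]

theorem IsSphereIsometry.exists_linear_extension_of_rank (hΔ : IsSphereIsometry Δ)
    (hH : 3 ≤ Module.rank ℂ H) :
    ∃ T : (H →L[ℂ] H) →ₗ[ℝ] Y,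
      (∀ x, ‖T x‖ = ‖x‖) ∧ Function.Surjective T ∧ ∀ x, ‖x‖ = 1 → T x = Δ x := by
  have hdual : ∀ p : {p : H × H // ‖p.1‖ = 1 ∧ ‖p.2‖ = 1}, ∃ ψ : StrongDual ℝ Y,
      ‖ψ‖ ≤ 1 ∧ ψ (Δ (rankOne ℂ p.1.1 p.1.2)) = 1 := fun p ↦ by
    obtain ⟨ψ, h1, h2⟩ := exists_dual_vector'' ℝ (Δ (rankOne ℂ p.1.1 p.1.2))
    refine ⟨ψ, h1, ?_⟩
    rw [h2, hΔ.norm_map _ (norm_rankOne_of_unit p.2.1 p.2.2)]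
    simp
  choose ψ hψ hψe using hdual
  refine hΔ.exists_linear_extension (ψ := fun p ↦ (ψ p).toLinearMap)
    (φ := fun p ↦ reCoeff p.1.1 p.1.2) (fun p x hx ↦ ?_) fun x hx ↦ ?_
  · exact hΔ.dual_map_eq_reCoeff hH p.2.1 p.2.2 (hψ p) (hψe p) hx
  · exact eq_zero_of_reCoeff_eq_zero fun ξ η hξ hη ↦ hx ⟨(ξ, η), hξ, hη⟩

end MazurUlam

/-- for a complex Hilbert space `H` with `dim H ≥ 3`, the von Neumann
algebra `B(H)` satisfies the Mazur–Ulam property: every surjective isometry between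
the unit sphere of `B(H)` and the unit sphere of a real Banach space `Y` admits a
unique extension to a surjective real-linear isometry from `B(H)` onto `Y`. -/
theorem mazur_ulam_property_BH_rank_ge_three
    {H : Type*} [NormedAddCommGroup H] [InnerProductSpace ℂ H] [CompleteSpace H]
    (hH : 3 ≤ Module.rank ℂ H)
    {Y : Type*} [NormedAddCommGroup Y] [NormedSpace ℝ Y] [CompleteSpace Y]
    (Δ : (H →L[ℂ] H) → Y)
    (hmap : ∀ x : H →L[ℂ] H, ‖x‖ = 1 → ‖Δ x‖ = 1)
    (hsurj : ∀ y : Y, ‖y‖ = 1 → ∃ x : H →L[ℂ] H, ‖x‖ = 1 ∧ Δ x = y)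
    (hiso : ∀ x y : H →L[ℂ] H, ‖x‖ = 1 → ‖y‖ = 1 → ‖Δ x - Δ y‖ = ‖x - y‖) :
    ∃! T : (H →L[ℂ] H) → Y,
      (∀ x y : H →L[ℂ] H, T (x + y) = T x + T y) ∧
      (∀ (r : ℝ) (x : H →L[ℂ] H), T (r • x) = r • T x) ∧
      (∀ x : H →L[ℂ] H, ‖T x‖ = ‖x‖) ∧
      Function.Surjective T ∧
      (∀ x : H →L[ℂ] H, ‖x‖ = 1 → T x = Δ x) := by
  obtain ⟨T, hT, hTs, hTΔ⟩ :=
    (⟨hmap, hsurj, hiso⟩ : IsSphereIsometry Δ).exists_linear_extension_of_rank hH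
  refine ⟨T, ⟨map_add T, map_smul T, hT, hTs, hTΔ⟩, fun S ⟨_, hS, _, _, hSΔ⟩ ↦ funext fun x ↦ ?_⟩
  rcases eq_or_ne x 0 with rfl | hx
  · simpa using hS 0 0
  have hx' : ‖‖x‖⁻¹ • x‖ = 1 := by
    rw [norm_smul, norm_inv, norm_norm, inv_mul_cancel₀ (norm_ne_zero_iff.mpr hx)]
  rw [← smul_inv_smul₀ (norm_ne_zero_iff.mpr hx) x, hS, map_smul, hSΔ _ hx', hTΔ _ hx']
end
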